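/- arXiv:1604.00284 — 3 statements merged into one kernel-verified Lean document; each statement's English description precedes it below -/
import Mathlib

section
/- Let a > 0 and δ ∈ (0,1/8) be fixed. The series ζ_R(s) = Σ_{k≥1} R_k(s) converges absolutely and locally uniformly on {s ∈ ℂ : Re(s) > 1}, and its sum extends to a meromorphic function on the half-plane {Re(s) > -3} whose only pole is at s = 1. This extension is holomorphic at s = 0, and its derivative at 0 satisfies ζ_R'(0) = O(1/a) as a → +∞; in particular ζ_R'(0) → 0 as a → +∞. -/
open MeasureTheory Filter

/-- The exponential integral `E₁(x) = ∫_x^∞ e^{-v}/v dv`, for `x > 0`. -/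
noncomputable def expIntegralE1 (x : ℝ) : ℝ :=
  ∫ v in Set.Ioi x, Real.exp (-v) / v

/-- `R_k(s) = -(2 sin(πs)/π) · e^{4πka} · E₁(4πka) · ∫_{k^δ}^∞ (t² - 1/4)^{-s} · 2t dt`. -/
noncomputable def cuspR (a δ : ℝ) (k : ℕ) (s : ℂ) : ℂ :=
  -(2 * Complex.sin ((Real.pi : ℂ) * s) / (Real.pi : ℂ)) *
    ((Real.exp (4 * Real.pi * k * a) * expIntegralE1 (4 * Real.pi * k * a) : ℝ) : ℂ) *
    ∫ t in Set.Ioi ((k : ℝ) ^ δ),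
      ((t ^ 2 - 1 / 4 : ℝ) : ℂ) ^ (-s) * ((2 * t : ℝ) : ℂ)


namespace Cusp

lemma int_aux (x : ℝ) (hx : 0 < x) (m : ℕ) :
    IntegrableOn (fun v : ℝ => Real.exp (-v) / v ^ m) (Set.Ioi x) := by
  have h1 : IntegrableOn (fun v : ℝ => Real.exp (-v) * (1 / x ^ m)) (Set.Ioi x) :=
    (integrableOn_exp_neg_Ioi x).mul_const _
  refine Integrable.mono h1 ?_ ?_
  · apply ContinuousOn.aestronglyMeasurable _ measurableSet_Ioi
    intro v hv
    have : v ^ m ≠ 0 := pow_ne_zero _ (hx.trans hv).ne'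
    exact ContinuousAt.continuousWithinAt (by fun_prop (disch := assumption))
  · refine (ae_restrict_iff' measurableSet_Ioi).2 (Eventually.of_forall fun v hv => ?_)
    have hv' : x < v := hv
    have : 0 < v := hx.trans hv'
    rw [Real.norm_of_nonneg (by positivity), Real.norm_of_nonneg (by positivity), div_eq_mul_one_div]
    gcongr

lemma E1_bounds (x : ℝ) (hx : 0 < x) :
    0 ≤ Real.exp x * expIntegralE1 x ∧ Real.exp x * expIntegralE1 x ≤ 1 / x ∧
    1 / x - 1 / x ^ 2 ≤ Real.exp x * expIntegralE1 x := by
  have i1 : IntegrableOn (fun v : ℝ => Real.exp (-v) / v) (Set.Ioi x) := by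
    simpa using int_aux x hx 1
  have i2 := int_aux x hx 2
  have key : ∫ v in Set.Ioi x, (Real.exp (-v) / v + Real.exp (-v) / v ^ 2)
      = 0 - (-(Real.exp (-x) / x)) := by
    apply integral_Ioi_of_hasDerivAt_of_tendsto (f := fun v => -(Real.exp (-v) / v))
    · exact ContinuousAt.continuousWithinAt (by fun_prop (disch := exact hx.ne'))
    · intro v hv
      have hv0 : v ≠ 0 := (hx.trans hv).ne'
      have := (((hasDerivAt_id v).neg.exp).div (hasDerivAt_id v) hv0).neg
      have e : Real.exp (-v) / v + Real.exp (-v) / v ^ 2 =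
          -((Real.exp ((-id) v) * -1 * id v - Real.exp ((-id) v) * 1) / id v ^ 2) := by
        simp only [Pi.neg_apply, id]
        field_simp
        ring
      rw [e]
      exact this
    · exact i1.add i2
    · have h : Tendsto (fun v : ℝ => Real.exp (-v) * v⁻¹) atTop (nhds (0 * 0)) :=
        (Real.tendsto_exp_neg_atTop_nhds_zero).mul tendsto_inv_atTop_zero
      simpa [div_eq_mul_inv] using h.neg
  rw [integral_add i1 i2] at key
  have hb2 : ∫ v in Set.Ioi x, Real.exp (-v) / v ^ 2 ≤ Real.exp (-x) * (1 / x ^ 2) := by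
    rw [← integral_exp_neg_Ioi x, ← integral_mul_const]
    apply setIntegral_mono_on i2 ((integrableOn_exp_neg_Ioi x).mul_const _) measurableSet_Ioi
    intro v hv
    have hv' : x < v := hv
    rw [div_eq_mul_one_div]
    gcongr
  have hb0 : 0 ≤ ∫ v in Set.Ioi x, Real.exp (-v) / v ^ 2 :=
    setIntegral_nonneg measurableSet_Ioi fun v hv => by positivity
  have hE0 : 0 ≤ expIntegralE1 x :=
    setIntegral_nonneg measurableSet_Ioi fun v hv => by
      have : 0 < v := hx.trans hv
      positivity
  have he : expIntegralE1 x = Real.exp (-x) / x - ∫ v in Set.Ioi x, Real.exp (-v) / v ^ 2 := by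
    unfold expIntegralE1; linarith
  have hee : Real.exp x * Real.exp (-x) = 1 := by rw [← Real.exp_add]; simp
  have hp := Real.exp_pos x
  refine ⟨by positivity, ?_, ?_⟩
  · calc Real.exp x * expIntegralE1 x ≤ Real.exp x * (Real.exp (-x) / x) := by gcongr; linarith
      _ = 1 / x := by rw [← mul_div_assoc, hee]
  · calc 1 / x - 1 / x ^ 2 = (Real.exp x * Real.exp (-x)) * (1 / x - 1 / x ^ 2) := by rw [hee, one_mul]
      _ = Real.exp x * (Real.exp (-x) / x - Real.exp (-x) * (1 / x ^ 2)) := by ring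
      _ ≤ _ := by gcongr; linarith

noncomputable def bco : ℕ → ℂ → ℂ
  | 0, _ => 1
  | j + 1, w => -(w / 4) * bco j (w - 1) / (j + 1)

noncomputable def rmd (n : ℕ) (w : ℂ) (x : ℝ) : ℂ :=
  ((1 - x / 4 : ℝ) : ℂ) ^ w - ∑ j ∈ Finset.range n, bco j w * (x : ℂ) ^ j

noncomputable def Cb : ℕ → ℝ → ℝ
  | 0, R => Real.exp R
  | n + 1, R => R * Cb n (R + 1)

lemma Cb_nonneg (n : ℕ) : ∀ R : ℝ, 0 ≤ R → 0 ≤ Cb n R := by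
  induction n with
  | zero => intro R _; exact (Real.exp_pos R).le
  | succ n ih => intro R hR; exact mul_nonneg hR (ih _ (by linarith))

lemma bco_diff (j : ℕ) : Differentiable ℂ (bco j) := by
  induction j with
  | zero => exact differentiable_const _
  | succ j ih =>
    have : bco (j + 1) = fun w => -(w / 4) * bco j (w - 1) / (j + 1) := by ext w; rfl
    rw [this]
    fun_prop

lemma rmd_deriv (n : ℕ) (w : ℂ) (x : ℝ) (hx : x < 4) :
    HasDerivAt (rmd (n + 1) w) (-(w / 4) * rmd n (w - 1) x) x := by
  have h1 : HasDerivAt (fun z : ℂ => (1 - z / 4) ^ w)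
      (w * (1 - (x : ℂ) / 4) ^ (w - 1) * (-(1 / 4))) (x : ℂ) := by
    apply HasDerivAt.cpow_const
    · exact ((hasDerivAt_id (x : ℂ)).div_const 4).const_sub 1
    · left
      have : (1 - (x : ℂ) / 4) = ((1 - x / 4 : ℝ) : ℂ) := by push_cast; rfl
      rw [this, Complex.ofReal_re]
      linarith
  have h2 : HasDerivAt (fun z : ℂ => ∑ j ∈ Finset.range (n + 1), bco j w * z ^ j)
      (∑ j ∈ Finset.range (n + 1), bco j w * (j * (x : ℂ) ^ (j - 1))) (x : ℂ) :=
    HasDerivAt.fun_sum fun j _ => (hasDerivAt_pow j (x : ℂ)).const_mul _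
  have h3 := (h1.sub h2).comp_ofReal
  have h4 : (fun y : ℝ => ((fun z : ℂ => (1 - z / 4) ^ w) -
      (fun z : ℂ => ∑ j ∈ Finset.range (n + 1), bco j w * z ^ j)) (y : ℂ)) = rmd (n + 1) w := by
    ext y
    simp [rmd]
  rw [h4] at h3
  convert h3 using 1
  rw [Finset.sum_range_succ']
  simp only [rmd, bco]
  push_cast
  rw [mul_sub, Finset.mul_sum]
  congr 1
  · ring
  · simp only [zero_mul, mul_zero, add_zero]
    apply Finset.sum_congr rfl
    intro j _
    have : (j : ℂ) + 1 ≠ 0 := by exact_mod_cast Nat.succ_ne_zero j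
    field_simp

lemma rmd_bound (n : ℕ) : ∀ (w : ℂ) (R : ℝ), ‖w‖ ≤ R → ∀ x ∈ Set.Icc (0 : ℝ) 1,
    ‖rmd n w x‖ ≤ Cb n R * x ^ n := by
  induction n with
  | zero =>
    intro w R hw x ⟨hx0, hx1⟩
    have hp : 0 < 1 - x / 4 := by linarith
    simp only [rmd, Finset.range_zero, Finset.sum_empty, sub_zero, Cb, pow_zero, mul_one]
    rw [Complex.norm_cpow_eq_rpow_re_of_pos hp, Real.rpow_def_of_pos hp]
    apply Real.exp_le_exp.2
    have h1 : Real.log (1 - x / 4) ≤ 0 := Real.log_nonpos hp.le (by linarith)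
    have h2 : -1 ≤ Real.log (1 - x / 4) := by
      have := Real.one_sub_inv_le_log_of_pos hp
      have h3 : (1 - x / 4)⁻¹ ≤ 2 := by
        rw [inv_le_comm₀ hp (by norm_num)]; linarith
      linarith
    have h3 : |w.re| ≤ R := (Complex.abs_re_le_norm w).trans hw
    calc Real.log (1 - x / 4) * w.re ≤ |Real.log (1 - x / 4) * w.re| := le_abs_self _
      _ = |Real.log (1 - x / 4)| * |w.re| := abs_mul _ _
      _ ≤ 1 * R := by
        gcongr
        rw [abs_le]; constructor <;> linarith
      _ = R := one_mul R
  | succ n ih =>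
    intro w R hw x ⟨hx0, hx1⟩
    have hR : 0 ≤ R := (norm_nonneg w).trans hw
    have h0 : rmd (n + 1) w 0 = 0 := by
      simp [rmd, Finset.sum_range_succ', bco]
    have := Convex.norm_image_sub_le_of_norm_hasDerivWithin_le (f := rmd (n + 1) w)
      (f' := fun y => -(w / 4) * rmd n (w - 1) y) (s := Set.Icc 0 x) (x := 0) (y := x)
      (C := R * Cb n (R + 1) * x ^ n)
      (fun y hy => (rmd_deriv n w y (by linarith [hy.2])).hasDerivWithinAt)
      (fun y hy => by
        have hb := ih (w - 1) (R + 1) ((norm_sub_le _ _).trans (by simpa using hw)) y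
          ⟨hy.1, hy.2.trans hx1⟩
        have hc := Cb_nonneg n (R + 1) (by linarith)
        rw [norm_mul, norm_neg, norm_div]
        have h4 : ‖w‖ / ‖(4 : ℂ)‖ ≤ R := by
          have : ‖(4 : ℂ)‖ = 4 := by simp
          rw [this]
          linarith [norm_nonneg w]
        calc _ ≤ R * (Cb n (R + 1) * y ^ n) := by gcongr
          _ ≤ R * (Cb n (R + 1) * x ^ n) := by
            have := pow_le_pow_left₀ hy.1 hy.2 n
            gcongr
          _ = _ := by ring)
      (convex_Icc _ _) ⟨le_rfl, hx0⟩ ⟨hx0, le_rfl⟩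
    rw [h0, sub_zero, sub_zero, Real.norm_of_nonneg hx0] at this
    refine this.trans (le_of_eq ?_)
    simp only [Cb]
    ring

/-- the entire function `-(2/π) sin(πs)/(s-1)` -/
noncomputable def P (s : ℂ) : ℂ :=
  -(2 / (Real.pi : ℂ)) * dslope (fun s : ℂ => Complex.sin ((Real.pi : ℂ) * s)) 1 s

lemma P_diff : Differentiable ℂ P := by
  have : Differentiable ℂ (dslope (fun s : ℂ => Complex.sin ((Real.pi : ℂ) * s)) 1) := by
    rw [← differentiableOn_univ, Complex.differentiableOn_dslope Filter.univ_mem]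
    fun_prop
  exact this.const_mul _

lemma pi_ne : (Real.pi : ℂ) ≠ 0 := Complex.ofReal_ne_zero.2 Real.pi_ne_zero

lemma P_one : P 1 = 2 := by
  have h : HasDerivAt (fun s : ℂ => Complex.sin ((Real.pi : ℂ) * s))
      (Complex.cos ((Real.pi : ℂ) * 1) * (Real.pi * 1)) 1 :=
    ((hasDerivAt_id (1 : ℂ)).const_mul (Real.pi : ℂ)).csin
  have := pi_ne
  rw [P, dslope_same, h.deriv]
  simp
  try field_simp

lemma P_ne (s : ℂ) (hs : s ≠ 1) : P s = -(2 * Complex.sin ((Real.pi : ℂ) * s) / (Real.pi : ℂ)) / (s - 1) := by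
  have := pi_ne
  have := sub_ne_zero.2 hs
  rw [P, dslope_of_ne _ hs, slope_def_field]
  simp
  try field_simp

lemma P_zero (j : ℕ) : P (1 - ((j + 1 : ℕ) : ℂ)) = 0 := by
  have h : (1 - ((j + 1 : ℕ) : ℂ)) = -(j : ℂ) := by push_cast; ring
  rw [h, P_ne]
  · have := Complex.sin_nat_mul_pi j
    rw [mul_neg, Complex.sin_neg, mul_comm (Real.pi : ℂ) (j : ℂ), this]
    simp
  · intro h
    have : ((j : ℂ) + 1) = 0 := by linear_combination -h
    exact_mod_cast this

/-- `u ζ(1+u)`, entire -/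
noncomputable def Ez : ℂ → ℂ := Function.update (fun u => u * riemannZeta (1 + u)) 0 1

lemma Ez_zero : Ez 0 = 1 := by simp [Ez]
lemma Ez_ne (u : ℂ) (hu : u ≠ 0) : Ez u = u * riemannZeta (1 + u) := by simp [Ez, hu]

lemma Ez_diff : Differentiable ℂ Ez := by
  have hd : ∀ u : ℂ, u ≠ 0 → DifferentiableAt ℂ Ez u := by
    intro u hu
    have h1 : Ez =ᶠ[nhds u] fun u => u * riemannZeta (1 + u) := by
      filter_upwards [isOpen_ne.mem_nhds hu] with v hv using Ez_ne v hv
    rw [h1.differentiableAt_iff]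
    refine differentiableAt_id.mul ?_
    apply DifferentiableAt.comp u (g := riemannZeta) (f := fun u : ℂ => 1 + u)
    · exact differentiableAt_riemannZeta (by simpa using hu)
    · fun_prop
  intro u
  by_cases hu : u = 0
  · subst hu
    apply AnalyticAt.differentiableAt
    apply Complex.analyticAt_of_differentiable_on_punctured_nhds_of_continuousAt
    · filter_upwards [self_mem_nhdsWithin] with z hz using hd z hz
    · rw [Ez, continuousAt_update_same]
      have h2 : Tendsto (fun u : ℂ => 1 + u) (nhdsWithin 0 {0}ᶜ) (nhdsWithin 1 {1}ᶜ) := by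
        apply tendsto_nhdsWithin_of_tendsto_nhds_of_eventually_within
        · have : Tendsto (fun u : ℂ => 1 + u) (nhds 0) (nhds (1 + 0)) :=
            Continuous.tendsto (by fun_prop) 0
          rw [add_zero] at this
          exact this.mono_left nhdsWithin_le_nhds
        · filter_upwards [self_mem_nhdsWithin] with z hz
          simpa using hz
      have := riemannZeta_residue_one.comp h2
      refine this.congr fun z => ?_
      simp
  · exact hd u hu

lemma integral_closed (c : ℝ) (hc : 1 ≤ c) (s : ℂ) (hs : 1 < s.re) :
    ∫ t in Set.Ioi c, ((t ^ 2 - 1 / 4 : ℝ) : ℂ) ^ (-s) * ((2 * t : ℝ) : ℂ)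
      = ((c ^ 2 - 1 / 4 : ℝ) : ℂ) ^ (1 - s) / (s - 1) := by
  have himg : (fun t : ℝ => t ^ 2 - 1 / 4) '' Set.Ioi c = Set.Ioi (c ^ 2 - 1 / 4) := by
    ext y
    simp only [Set.mem_image, Set.mem_Ioi]
    constructor
    · rintro ⟨t, ht, rfl⟩
      nlinarith
    · intro hy
      refine ⟨Real.sqrt (y + 1 / 4), ?_, ?_⟩
      · apply Real.lt_sqrt_of_sq_lt; linarith
      · rw [Real.sq_sqrt (by nlinarith)]; ring
  have h := integral_image_eq_integral_abs_deriv_smul (s := Set.Ioi c)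
    (f := fun t : ℝ => t ^ 2 - 1 / 4) (f' := fun t => 2 * t) measurableSet_Ioi
    (fun t _ => by
      have := ((hasDerivAt_pow 2 t).sub_const (1 / 4 : ℝ)).hasDerivWithinAt (s := Set.Ioi c)
      simpa using this)
    (fun t ht u hu htu => by
      have ht' : c < t := ht
      have hu' : c < u := hu
      have : t ^ 2 = u ^ 2 := by simpa using htu
      exact (pow_left_inj₀ (by linarith) (by linarith) two_ne_zero).1 this)
    (fun y : ℝ => (y : ℂ) ^ (-s))
  rw [himg, integral_Ioi_cpow_of_lt (by simpa using hs) (by nlinarith)] at h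
  have h2 : ∫ t in Set.Ioi c, ((t ^ 2 - 1 / 4 : ℝ) : ℂ) ^ (-s) * ((2 * t : ℝ) : ℂ)
      = ∫ t in Set.Ioi c, |2 * t| • (((t ^ 2 - 1 / 4 : ℝ) : ℂ) ^ (-s)) := by
    apply setIntegral_congr_fun measurableSet_Ioi
    intro t ht
    have ht' : c < t := ht
    simp only
    rw [abs_of_nonneg (by linarith), Complex.real_smul, mul_comm]
  rw [h2, ← h, show -s + 1 = 1 - s by ring, show (1 : ℂ) - s = -(s - 1) by ring, neg_div_neg_eq]

lemma hfac (δ N : ℝ) (hN : 1 ≤ N) (w : ℂ) :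
    ((N ^ (2 * δ) - 1 / 4 : ℝ) : ℂ) ^ w
      = (N : ℂ) ^ (2 * (δ : ℂ) * w) * ((1 - N ^ (-(2 * δ)) / 4 : ℝ) : ℂ) ^ w ∨ δ < 0 := by
  by_cases hδ : δ < 0
  · exact Or.inr hδ
  left
  push Not at hδ
  have hN0 : 0 < N := by linarith
  have hx : N ^ (-(2 * δ)) ≤ 1 := Real.rpow_le_one_of_one_le_of_nonpos hN (by linarith)
  have hp : 0 < N ^ (2 * δ) := Real.rpow_pos_of_pos hN0 _
  have h1 : N ^ (2 * δ) - 1 / 4 = N ^ (2 * δ) * (1 - N ^ (-(2 * δ)) / 4) := by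
    rw [Real.rpow_neg hN0.le]; field_simp
  rw [h1, Complex.ofReal_mul, Complex.mul_cpow_ofReal_nonneg hp.le (by linarith)]
  congr 1
  rw [Complex.cpow_def_of_ne_zero (by exact_mod_cast hp.ne'),
    Complex.cpow_def_of_ne_zero (by exact_mod_cast hN0.ne'), ← Complex.ofReal_log hp.le,
    ← Complex.ofReal_log hN0.le, Real.log_rpow hN0]
  congr 1
  push_cast
  ring

lemma xmem (δ N : ℝ) (hδ : 0 < δ) (hN : 1 ≤ N) : N ^ (-(2 * δ)) ∈ Set.Icc (0 : ℝ) 1 :=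
  ⟨Real.rpow_nonneg (by linarith) _, Real.rpow_le_one_of_one_le_of_nonpos hN (by linarith)⟩

lemma hnorm (δ N : ℝ) (hδ : 0 < δ) (hN : 1 ≤ N) (w : ℂ) :
    ‖((N ^ (2 * δ) - 1 / 4 : ℝ) : ℂ) ^ w‖ ≤ N ^ (2 * δ * w.re) * Real.exp ‖w‖ := by
  have hN0 : 0 < N := by linarith
  rw [(hfac δ N hN w).resolve_right (by linarith), norm_mul]
  have h1 := rmd_bound 0 w ‖w‖ le_rfl _ (xmem δ N hδ hN)
  simp only [rmd, Finset.range_zero, Finset.sum_empty, sub_zero, Cb, pow_zero, mul_one] at h1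
  rw [Complex.norm_cpow_eq_rpow_re_of_pos hN0]
  have : (2 * (δ : ℂ) * w).re = 2 * δ * w.re := by simp
  rw [this]
  gcongr

lemma summ (C p : ℝ) (hp : p < -1) : Summable fun k : ℕ => C * ((k : ℝ) + 1) ^ p := by
  have h := (summable_nat_add_iff 1).2 (Real.summable_nat_rpow.2 hp)
  push_cast at h
  exact h.mul_left C

/-- locally uniform domination by a convergent p-series -/
def Dom (τ : ℝ) (f : ℕ → ℂ → ℂ) : Prop :=
  ∀ σ M : ℝ, τ < σ → ∃ C p : ℝ, p < -1 ∧ ∀ (k : ℕ) (s : ℂ), σ < s.re → ‖s‖ < M →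
    ‖f k s‖ ≤ C * ((k : ℝ) + 1) ^ p

lemma Dom.summable {τ : ℝ} {f : ℕ → ℂ → ℂ} (h : Dom τ f) (s : ℂ) (hs : τ < s.re) :
    Summable fun k => ‖f k s‖ := by
  obtain ⟨C, p, hp, hb⟩ := h ((τ + s.re) / 2) (‖s‖ + 1) (by linarith)
  exact Summable.of_nonneg_of_le (fun _ => norm_nonneg _)
    (fun k => hb k s (by linarith) (by linarith)) (summ C p hp)

lemma Dom.locunif {τ : ℝ} {f : ℕ → ℂ → ℂ} (h : Dom τ f) :
    TendstoLocallyUniformlyOn (fun (n : ℕ) (s : ℂ) => ∑ k ∈ Finset.range n, f k s)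
      (fun s => ∑' k, f k s) atTop {s : ℂ | τ < s.re} := by
  apply tendstoLocallyUniformlyOn_of_forall_exists_nhds
  intro s hs
  have hs' : τ < s.re := hs
  obtain ⟨C, p, hp, hb⟩ := h ((τ + s.re) / 2) (‖s‖ + 1) (by linarith)
  refine ⟨{z : ℂ | (τ + s.re) / 2 < z.re} ∩ {z : ℂ | ‖z‖ < ‖s‖ + 1}, ?_, ?_⟩
  · apply mem_nhdsWithin_of_mem_nhds
    apply IsOpen.mem_nhds
    · exact (isOpen_lt continuous_const Complex.continuous_re).inter
        (isOpen_lt continuous_norm continuous_const)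
    · constructor
      · show (τ + s.re) / 2 < s.re
        linarith
      · show ‖s‖ < ‖s‖ + 1
        linarith
  · exact tendstoUniformlyOn_tsum_nat (summ C p hp) fun k z hz => hb k z hz.1 hz.2

lemma isOpen_re (τ : ℝ) : IsOpen {s : ℂ | τ < s.re} :=
  isOpen_lt continuous_const Complex.continuous_re

lemma Dom.diff {τ : ℝ} {f : ℕ → ℂ → ℂ} (h : Dom τ f) (hf : ∀ k, Differentiable ℂ (f k)) :
    DifferentiableOn ℂ (fun s => ∑' k, f k s) {s : ℂ | τ < s.re} := by
  refine h.locunif.differentiableOn (Eventually.of_forall fun n => ?_) (isOpen_re τ)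
  exact (Differentiable.fun_sum fun k _ => hf k).differentiableOn

noncomputable def cf (a N : ℝ) : ℝ :=
  Real.exp (4 * Real.pi * N * a) * expIntegralE1 (4 * Real.pi * N * a)

noncomputable def hk (δ : ℝ) (k : ℕ) (w : ℂ) : ℂ :=
  ((((k : ℝ) + 1) ^ (2 * δ) - 1 / 4 : ℝ) : ℂ) ^ w

noncomputable def dt (a δ : ℝ) (k : ℕ) (s : ℂ) : ℂ :=
  ((cf a ((k : ℝ) + 1) - 1 / (4 * Real.pi * ((k : ℝ) + 1) * a) : ℝ) : ℂ) * hk δ k (1 - s)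

noncomputable def rt (δ : ℝ) (k : ℕ) (s : ℂ) : ℂ :=
  ((((k : ℝ) + 1 : ℝ)) : ℂ) ^ (-1 + 2 * (δ : ℂ) * (1 - s)) *
    rmd 4 (1 - s) (((k : ℝ) + 1) ^ (-(2 * δ)))

lemma one_le_N (k : ℕ) : (1 : ℝ) ≤ (k : ℝ) + 1 := by
  have : (0 : ℝ) ≤ k := k.cast_nonneg
  linarith

lemma hk_pos (δ : ℝ) (hδ : 0 < δ) (k : ℕ) : 0 < ((k : ℝ) + 1) ^ (2 * δ) - 1 / 4 := by
  have := Real.one_le_rpow (one_le_N k) (show 0 ≤ 2 * δ by linarith)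
  linarith

lemma hk_diff (δ : ℝ) (hδ : 0 < δ) (k : ℕ) : Differentiable ℂ fun s => hk δ k (1 - s) := by
  intro s
  apply DifferentiableAt.const_cpow (by fun_prop)
  left
  exact_mod_cast (hk_pos δ hδ k).ne'

lemma dt_diff (a δ : ℝ) (hδ : 0 < δ) (k : ℕ) : Differentiable ℂ (dt a δ k) :=
  (hk_diff δ hδ k).const_mul _

lemma rt_diff (δ : ℝ) (hδ : 0 < δ) (k : ℕ) : Differentiable ℂ (rt δ k) := by
  have hN := one_le_N k
  have hx := xmem δ _ hδ hN
  have h1 : Differentiable ℂ fun s : ℂ => ((((k : ℝ) + 1 : ℝ)) : ℂ) ^ (-1 + 2 * (δ : ℂ) * (1 - s)) := by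
    intro s
    apply DifferentiableAt.const_cpow (by fun_prop)
    left
    exact_mod_cast (by linarith : (0 : ℝ) < (k : ℝ) + 1).ne'
  have h2 : Differentiable ℂ fun s : ℂ => rmd 4 (1 - s) (((k : ℝ) + 1) ^ (-(2 * δ))) := by
    unfold rmd
    apply Differentiable.sub
    · intro s
      apply DifferentiableAt.const_cpow (by fun_prop)
      left
      have := hx.2
      exact_mod_cast (by linarith : (0 : ℝ) < 1 - ((k : ℝ) + 1) ^ (-(2 * δ)) / 4).ne'
    · apply Differentiable.fun_sum
      intro j _
      have := bco_diff j
      fun_prop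
  exact h1.mul h2

lemma cf_bound (a N : ℝ) (ha : 0 < a) (hN : 1 ≤ N) :
    |cf a N| ≤ 1 / a * N ^ (-1 : ℝ) ∧
    |cf a N - 1 / (4 * Real.pi * N * a)| ≤ 1 / a ^ 2 * N ^ (-2 : ℝ) := by
  have hN0 : 0 < N := by linarith
  have hpi := Real.pi_gt_three
  have hx : 0 < 4 * Real.pi * N * a := by positivity
  have hle : N * a ≤ 4 * Real.pi * N * a := by
    have : 0 < N * a := by positivity
    nlinarith
  obtain ⟨h0, h1, h2⟩ := E1_bounds _ hx
  constructor
  · rw [cf, abs_of_nonneg h0, Real.rpow_neg_one]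
    refine h1.trans ?_
    calc 1 / (4 * Real.pi * N * a) ≤ 1 / (N * a) := by gcongr
      _ = _ := by field_simp
  · have h3 : |cf a N - 1 / (4 * Real.pi * N * a)| ≤ 1 / (4 * Real.pi * N * a) ^ 2 := by
      have : 0 < 1 / (4 * Real.pi * N * a) ^ 2 := by positivity
      rw [abs_le, cf]
      constructor <;> linarith
    refine h3.trans ?_
    rw [Real.rpow_neg hN0.le]
    calc 1 / (4 * Real.pi * N * a) ^ 2 ≤ 1 / (N * a) ^ 2 := by gcongr
      _ = _ := by
        norm_num
        field_simp

lemma norm_one_sub (s : ℂ) (M : ℝ) (h : ‖s‖ < M) : ‖1 - s‖ ≤ M + 1 := by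
  refine (norm_sub_le _ _).trans ?_
  simp
  linarith

lemma dt_bound (a δ : ℝ) (ha : 0 < a) (hδ : 0 < δ) (k : ℕ) (s : ℂ) (M : ℝ)
    (hs : -3 < s.re) (hM : ‖s‖ < M) :
    ‖dt a δ k s‖ ≤ 1 / a ^ 2 * Real.exp (M + 1) * ((k : ℝ) + 1) ^ (-2 + 8 * δ) := by
  have hN := one_le_N k
  have hN0 : (0 : ℝ) < (k : ℝ) + 1 := by linarith
  have h1 := (cf_bound a _ ha hN).2
  have h2 := hnorm δ _ hδ hN (1 - s)
  rw [dt, norm_mul, Complex.norm_real, Real.norm_eq_abs]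
  calc _ ≤ (1 / a ^ 2 * ((k : ℝ) + 1) ^ (-2 : ℝ)) *
        (((k : ℝ) + 1) ^ (8 * δ) * Real.exp (M + 1)) := by
        refine mul_le_mul h1 (h2.trans ?_) (norm_nonneg _) (by positivity)
        have := norm_one_sub s M hM
        have h3 : 2 * δ * (1 - s).re ≤ 8 * δ := by simp; nlinarith
        gcongr
    _ = _ := by rw [Real.rpow_add hN0]; ring

lemma dt_dom (a δ : ℝ) (ha : 0 < a) (hδ : 0 < δ) (hδ1 : δ < 1 / 8) : Dom (-3) (dt a δ) := by
  intro σ M hσ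
  exact ⟨1 / a ^ 2 * Real.exp (M + 1), -2 + 8 * δ, by linarith, fun k s hs hM =>
    dt_bound a δ ha hδ k s M (by linarith) hM⟩

lemma rt_dom (δ : ℝ) (hδ : 0 < δ) : Dom (-3) (rt δ) := by
  intro σ M hσ
  refine ⟨Cb 4 (M + 1), -1 - 2 * δ * (σ + 3), by nlinarith, fun k s hs hM => ?_⟩
  have hN := one_le_N k
  have hN0 : (0 : ℝ) < (k : ℝ) + 1 := by linarith
  have hM0 : 0 ≤ M := (norm_nonneg s).trans hM.le
  have h1 := rmd_bound 4 (1 - s) (M + 1) (norm_one_sub s M hM) _ (xmem δ _ hδ hN)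
  have hC := Cb_nonneg 4 (M + 1) (by linarith)
  rw [rt, norm_mul, Complex.norm_cpow_eq_rpow_re_of_pos hN0]
  rw [← Real.rpow_natCast, ← Real.rpow_mul hN0.le] at h1
  calc _ ≤ ((k : ℝ) + 1) ^ (-1 + 2 * δ * (1 - σ)) *
        (Cb 4 (M + 1) * ((k : ℝ) + 1) ^ (-(2 * δ) * ((4 : ℕ) : ℝ))) := by
        refine mul_le_mul ?_ h1 (norm_nonneg _) (by positivity)
        apply Real.rpow_le_rpow_of_exponent_le hN
        simp; nlinarith
    _ = Cb 4 (M + 1) * (((k : ℝ) + 1) ^ (-1 + 2 * δ * (1 - σ)) *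
          ((k : ℝ) + 1) ^ (-(2 * δ) * ((4 : ℕ) : ℝ))) := by ring
    _ = _ := by
        rw [← Real.rpow_add hN0]
        congr 2
        push_cast
        ring

lemma cusp_eq (a δ : ℝ) (hδ : 0 < δ) (k : ℕ) (s : ℂ) (hs : 1 < s.re) :
    cuspR a δ (k + 1) s = P s * ((cf a ((k : ℝ) + 1) : ℂ) * hk δ k (1 - s)) := by
  have hN := one_le_N k
  have hN0 : (0 : ℝ) < (k : ℝ) + 1 := by linarith
  have hs1 : s ≠ 1 := by rintro rfl; simp at hs
  have hc : (1 : ℝ) ≤ ((k + 1 : ℕ) : ℝ) ^ δ :=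
    Real.one_le_rpow (by push_cast; exact hN) hδ.le
  have h2 : (((k + 1 : ℕ) : ℝ) ^ δ) ^ 2 = ((k : ℝ) + 1) ^ (2 * δ) := by
    push_cast
    rw [← Real.rpow_natCast, ← Real.rpow_mul hN0.le]
    congr 1
    push_cast; ring
  rw [cuspR, integral_closed _ hc s hs, h2, P_ne s hs1, hk, cf]
  push_cast
  ring

lemma cusp_dom (a δ : ℝ) (ha : 0 < a) (hδ : 0 < δ) :
    Dom 1 (fun k s => cuspR a δ (k + 1) s) := by
  intro σ M hσ
  obtain ⟨B, hB⟩ := (isCompact_closedBall (0 : ℂ) M).exists_bound_of_continuousOn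
    P_diff.continuous.continuousOn
  refine ⟨|B| * (1 / a * Real.exp (M + 1)), -1 - 2 * δ * (σ - 1), by nlinarith, fun k s hs hM => ?_⟩
  have hN := one_le_N k
  have hN0 : (0 : ℝ) < (k : ℝ) + 1 := by linarith
  have hPb : ‖P s‖ ≤ |B| := (hB s (by simpa using hM.le)).trans (le_abs_self B)
  have h1 := (cf_bound a _ ha hN).1
  have h2 := hnorm δ _ hδ hN (1 - s)
  show ‖cuspR a δ (k + 1) s‖ ≤ _
  rw [cusp_eq a δ hδ k s (by linarith), norm_mul, norm_mul, Complex.norm_real, Real.norm_eq_abs]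
  calc _ ≤ |B| * ((1 / a * ((k : ℝ) + 1) ^ (-1 : ℝ)) *
        (((k : ℝ) + 1) ^ (2 * δ * (1 - σ)) * Real.exp (M + 1))) := by
        refine mul_le_mul hPb ?_ (by positivity) (by positivity)
        refine mul_le_mul h1 (h2.trans ?_) (norm_nonneg _) (by positivity)
        have := norm_one_sub s M hM
        gcongr
        · simp; linarith
    _ = |B| * (1 / a * Real.exp (M + 1)) * (((k : ℝ) + 1) ^ (-1 : ℝ) *
        (((k : ℝ) + 1) ^ (2 * δ * (1 - σ)))) := by ring
    _ = _ := by
        rw [← Real.rpow_add hN0]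
        congr 2
        ring

/-- pointwise decomposition -/
lemma term_eq (a δ : ℝ) (ha : 0 < a) (hδ : 0 < δ) (k : ℕ) (s : ℂ) :
    (cf a ((k : ℝ) + 1) : ℂ) * hk δ k (1 - s) = dt a δ k s + (1 / (4 * Real.pi * a) : ℂ) *
      (rt δ k s + ∑ j ∈ Finset.range 4, bco j (1 - s) *
        (1 / ((k : ℂ) + 1) ^ (1 + 2 * (δ : ℂ) * (s - (1 - (j : ℂ)))))) := by
  have hN := one_le_N k
  have hN0 : (0 : ℝ) < (k : ℝ) + 1 := by linarith
  have hNc : (k : ℂ) + 1 ≠ 0 := by exact_mod_cast hN0.ne'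
  have hpi := pi_ne
  have hac : (a : ℂ) ≠ 0 := by exact_mod_cast ha.ne'
  have h1 : rt δ k s + ∑ j ∈ Finset.range 4, bco j (1 - s) *
        (1 / ((k : ℂ) + 1) ^ (1 + 2 * (δ : ℂ) * (s - (1 - (j : ℂ)))))
      = 1 / ((k : ℂ) + 1) * hk δ k (1 - s) := by
    have hh : hk δ k (1 - s) = _ := (hfac δ _ hN (1 - s)).resolve_right (by linarith)
    have e1 : ((((k : ℝ) + 1 : ℝ)) : ℂ) = (k : ℂ) + 1 := by push_cast; rfl
    have e2 : ((k : ℂ) + 1) ^ (-1 + 2 * (δ : ℂ) * (1 - s))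
        = 1 / ((k : ℂ) + 1) * ((k : ℂ) + 1) ^ (2 * (δ : ℂ) * (1 - s)) := by
      rw [Complex.cpow_add _ _ hNc, Complex.cpow_neg_one, one_div]
    have e3 : ∀ j : ℕ, 1 / ((k : ℂ) + 1) ^ (1 + 2 * (δ : ℂ) * (s - (1 - (j : ℂ))))
        = ((k : ℂ) + 1) ^ (-1 + 2 * (δ : ℂ) * (1 - s)) *
          (((((k : ℝ) + 1) ^ (-(2 * δ)) : ℝ)) : ℂ) ^ j := by
      intro j
      rw [Complex.ofReal_cpow hN0.le, e1, ← Complex.cpow_nat_mul, ← Complex.cpow_add _ _ hNc,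
        one_div, ← Complex.cpow_neg]
      congr 1
      push_cast
      ring
    simp only [e3]
    rw [rt, hh, e1, ← mul_assoc, ← e2, rmd, mul_sub, Finset.mul_sum, sub_add]
    rw [sub_eq_self, sub_eq_zero]
    apply Finset.sum_congr rfl
    intro j _
    ring
  rw [h1, dt]
  push_cast
  field_simp
  ring

lemma zeta_hasSum (z : ℂ) (hz : 1 < z.re) :
    HasSum (fun k : ℕ => 1 / ((k : ℂ) + 1) ^ z) (riemannZeta z) := by
  have h := (summable_nat_add_iff 1).2 (Complex.summable_one_div_nat_cpow.2 hz)
  push_cast at h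
  rw [zeta_eq_tsum_one_div_nat_add_one_cpow hz]
  exact h.hasSum

noncomputable def Dsum (a δ : ℝ) (s : ℂ) : ℂ := ∑' k, dt a δ k s
noncomputable def Rsum (δ : ℝ) (s : ℂ) : ℂ := ∑' k, rt δ k s

noncomputable def G0 (δ : ℝ) (s : ℂ) : ℂ :=
  P s * Rsum δ s + ∑ j ∈ Finset.range 3, bco (j + 1) (1 - s) *
    (dslope P (1 - ((j + 1 : ℕ) : ℂ)) s *
      Ez (2 * (δ : ℂ) * (s - (1 - ((j + 1 : ℕ) : ℂ)))) / (2 * (δ : ℂ)))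

noncomputable def G (δ : ℝ) (s : ℂ) : ℂ :=
  G0 δ s + P s * Ez (2 * (δ : ℂ) * (s - 1)) / (2 * (δ : ℂ)) / (s - 1)

noncomputable def F (δ a : ℝ) (s : ℂ) : ℂ :=
  P s * Dsum a δ s + (1 / (4 * Real.pi * a) : ℂ) * G δ s

lemma F_eq (a δ : ℝ) (ha : 0 < a) (hδ : 0 < δ) (hδ1 : δ < 1 / 8) (s : ℂ) (hs : 1 < s.re) :
    F δ a s = ∑' k : ℕ, cuspR a δ (k + 1) s := by
  have hD : HasSum (fun k => dt a δ k s) (Dsum a δ s) :=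
    ((dt_dom a δ ha hδ hδ1).summable s (by linarith)).of_norm.hasSum
  have hR : HasSum (fun k => rt δ k s) (Rsum δ s) :=
    ((rt_dom δ hδ).summable s (by linarith)).of_norm.hasSum
  have hZ : HasSum (fun k : ℕ => ∑ j ∈ Finset.range 4, bco j (1 - s) *
        (1 / ((k : ℂ) + 1) ^ (1 + 2 * (δ : ℂ) * (s - (1 - (j : ℂ))))))
      (∑ j ∈ Finset.range 4, bco j (1 - s) *
        riemannZeta (1 + 2 * (δ : ℂ) * (s - (1 - (j : ℂ))))) := by
    apply hasSum_sum
    intro j _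
    apply HasSum.mul_left
    apply zeta_hasSum
    have : 0 < δ * (s.re - (1 - j)) := by
      apply mul_pos hδ
      have : (0 : ℝ) ≤ j := j.cast_nonneg
      linarith
    simp
    linarith
  have hall := (hD.add ((hR.add hZ).mul_left (1 / (4 * Real.pi * a) : ℂ))).mul_left (P s)
  have hterm : (fun k : ℕ => cuspR a δ (k + 1) s) = fun k : ℕ => P s * (dt a δ k s +
      (1 / (4 * Real.pi * a) : ℂ) * (rt δ k s + ∑ j ∈ Finset.range 4, bco j (1 - s) *
        (1 / ((k : ℂ) + 1) ^ (1 + 2 * (δ : ℂ) * (s - (1 - (j : ℂ))))))) := by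
    ext k
    rw [cusp_eq a δ hδ k s hs, term_eq a δ ha hδ]
  rw [hterm, hall.tsum_eq]
  have hδc : (δ : ℂ) ≠ 0 := by exact_mod_cast hδ.ne'
  have hne : ∀ j : ℕ, s - (1 - (j : ℂ)) ≠ 0 := by
    intro j h
    have := congrArg Complex.re h
    simp at this
    have : (0 : ℝ) ≤ j := j.cast_nonneg
    linarith
  have hE : ∀ j : ℕ, Ez (2 * (δ : ℂ) * (s - (1 - (j : ℂ)))) =
      2 * (δ : ℂ) * (s - (1 - (j : ℂ))) * riemannZeta (1 + 2 * (δ : ℂ) * (s - (1 - (j : ℂ)))) :=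
    fun j => Ez_ne _ (mul_ne_zero (mul_ne_zero two_ne_zero hδc) (hne j))
  have hj : ∀ j : ℕ, dslope P (1 - ((j + 1 : ℕ) : ℂ)) s *
      Ez (2 * (δ : ℂ) * (s - (1 - ((j + 1 : ℕ) : ℂ)))) / (2 * (δ : ℂ)) =
      P s * riemannZeta (1 + 2 * (δ : ℂ) * (s - (1 - ((j + 1 : ℕ) : ℂ)))) := by
    intro j
    have h1 := hne (j + 1)
    rw [hE (j + 1), dslope_of_ne _ (sub_ne_zero.1 h1), slope_def_field, P_zero, sub_zero]
    generalize riemannZeta _ = Z at *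
    field_simp
  have h0 : P s * Ez (2 * (δ : ℂ) * (s - 1)) / (2 * (δ : ℂ)) / (s - 1) =
      P s * riemannZeta (1 + 2 * (δ : ℂ) * (s - (1 - ((0 : ℕ) : ℂ)))) := by
    have h1 := hne 0
    have h2 := hE 0
    simp only [Nat.cast_zero, sub_zero] at h1 h2 ⊢
    rw [h2]
    generalize riemannZeta _ = Z at *
    field_simp
  rw [F, G, G0, h0, Finset.sum_range_succ' _ 3]
  simp only [hj]
  rw [mul_add (P s), mul_left_comm (P s), mul_add (P s) (Rsum δ s), mul_add (P s), Finset.mul_sum]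
  have hb : bco 0 (1 - s) = 1 := rfl
  rw [hb, one_mul, add_assoc (P s * Rsum δ s)]
  congr 4
  apply Finset.sum_congr rfl
  intro j _
  ring

lemma dslope_diff (f : ℂ → ℂ) (hf : Differentiable ℂ f) (c : ℂ) : Differentiable ℂ (dslope f c) := by
  rw [← differentiableOn_univ, Complex.differentiableOn_dslope Filter.univ_mem]
  exact hf.differentiableOn

lemma an_of (f : ℂ → ℂ) (hf : DifferentiableOn ℂ f {s : ℂ | -3 < s.re}) (s : ℂ) (hs : -3 < s.re) :
    AnalyticAt ℂ f s := hf.analyticAt ((isOpen_re (-3)).mem_nhds hs)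

lemma G0_an (δ : ℝ) (hδ : 0 < δ) (s : ℂ) (hs : -3 < s.re) : AnalyticAt ℂ (G0 δ) s := by
  refine an_of _ ?_ s hs
  have h1 : DifferentiableOn ℂ (Rsum δ) {s : ℂ | -3 < s.re} := (rt_dom δ hδ).diff (rt_diff δ hδ)
  refine (P_diff.differentiableOn.mul h1).add ?_
  apply Differentiable.differentiableOn
  apply Differentiable.fun_sum
  intro j _
  have h2 := bco_diff (j + 1)
  have h3 := dslope_diff P P_diff (1 - ((j + 1 : ℕ) : ℂ))
  have h4 := Ez_diff
  fun_prop

lemma D_an (a δ : ℝ) (ha : 0 < a) (hδ : 0 < δ) (hδ1 : δ < 1 / 8) (s : ℂ) (hs : -3 < s.re) :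
    AnalyticAt ℂ (Dsum a δ) s :=
  an_of _ ((dt_dom a δ ha hδ hδ1).diff (dt_diff a δ hδ)) s hs

lemma PE_diff (δ : ℝ) :
    Differentiable ℂ fun s : ℂ => P s * Ez (2 * (δ : ℂ) * (s - 1)) / (2 * (δ : ℂ)) := by
  have h2 := P_diff
  have h4 := Ez_diff
  fun_prop

lemma G_mero (δ : ℝ) (hδ : 0 < δ) (s : ℂ) (hs : -3 < s.re) : MeromorphicAt (G δ) s := by
  refine (G0_an δ hδ s hs).meromorphicAt.add (MeromorphicAt.div ?_ ?_)
  · exact ((PE_diff δ).analyticAt s).meromorphicAt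
  · exact (Differentiable.analyticAt (f := fun s : ℂ => s - 1) (by fun_prop) s).meromorphicAt

lemma G_an (δ : ℝ) (hδ : 0 < δ) (s : ℂ) (hs : -3 < s.re) (h1 : s ≠ 1) : AnalyticAt ℂ (G δ) s := by
  refine (G0_an δ hδ s hs).add (AnalyticAt.div ?_ ?_ (sub_ne_zero.2 h1))
  · exact (PE_diff δ).analyticAt s
  · exact Differentiable.analyticAt (f := fun s : ℂ => s - 1) (by fun_prop) s

lemma F_mero (a δ : ℝ) (ha : 0 < a) (hδ : 0 < δ) (hδ1 : δ < 1 / 8) (s : ℂ) (hs : -3 < s.re) :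
    MeromorphicAt (F δ a) s :=
  ((P_diff.analyticAt s).mul (D_an a δ ha hδ hδ1 s hs)).meromorphicAt.add
    ((analyticAt_const (v := (1 / (4 * Real.pi * a) : ℂ))).meromorphicAt.mul (G_mero δ hδ s hs))

lemma F_an (a δ : ℝ) (ha : 0 < a) (hδ : 0 < δ) (hδ1 : δ < 1 / 8) (s : ℂ) (hs : -3 < s.re)
    (h1 : s ≠ 1) : AnalyticAt ℂ (F δ a) s :=
  ((P_diff.analyticAt s).mul (D_an a δ ha hδ hδ1 s hs)).add
    ((analyticAt_const (v := (1 / (4 * Real.pi * a) : ℂ))).mul (G_an δ hδ s hs h1))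

lemma F_not (a δ : ℝ) (ha : 0 < a) (hδ : 0 < δ) (hδ1 : δ < 1 / 8) : ¬ AnalyticAt ℂ (F δ a) 1 := by
  intro hF
  have hone : -3 < (1 : ℂ).re := by simp; norm_num
  have hδc : (δ : ℂ) ≠ 0 := by exact_mod_cast hδ.ne'
  have hac : (a : ℂ) ≠ 0 := by exact_mod_cast ha.ne'
  have hpi := pi_ne
  have hs1 : ContinuousAt (fun s : ℂ => s - 1) 1 := by fun_prop
  have c1 : ContinuousAt (fun s => (s - 1) * (F δ a s - (P s * Dsum a δ s +
      (1 / (4 * Real.pi * a) : ℂ) * G0 δ s))) 1 :=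
    hs1.mul (hF.continuousAt.sub
      ((P_diff.continuous.continuousAt.mul (D_an a δ ha hδ hδ1 1 hone).continuousAt).add
        (continuousAt_const.mul (G0_an δ hδ 1 hone).continuousAt)))
  have c2 : ContinuousAt (fun s : ℂ => (1 / (4 * Real.pi * a) : ℂ) *
      (P s * Ez (2 * (δ : ℂ) * (s - 1)) / (2 * (δ : ℂ)))) 1 :=
    continuousAt_const.mul (PE_diff δ).continuous.continuousAt
  have t1 := c1.tendsto.mono_left (nhdsWithin_le_nhds (s := {(1 : ℂ)}ᶜ))
  have t2 := c2.tendsto.mono_left (nhdsWithin_le_nhds (s := {(1 : ℂ)}ᶜ))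
  have heq : (fun s => (s - 1) * (F δ a s - (P s * Dsum a δ s +
      (1 / (4 * Real.pi * a) : ℂ) * G0 δ s))) =ᶠ[nhdsWithin 1 {(1 : ℂ)}ᶜ]
      (fun s : ℂ => (1 / (4 * Real.pi * a) : ℂ) *
      (P s * Ez (2 * (δ : ℂ) * (s - 1)) / (2 * (δ : ℂ)))) := by
    filter_upwards [self_mem_nhdsWithin] with s hs
    have : s - 1 ≠ 0 := sub_ne_zero.2 hs
    rw [F, G]
    generalize P s * Ez (2 * (δ : ℂ) * (s - 1)) / (2 * (δ : ℂ)) = X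
    field_simp
    ring
  have := tendsto_nhds_unique (t1.congr' heq) t2
  simp only [sub_self, zero_mul, mul_zero, Ez_zero, P_one] at this
  have h2 : (1 / (4 * Real.pi * a) : ℂ) * (2 * 1 / (2 * (δ : ℂ))) ≠ 0 := by
    apply mul_ne_zero
    · exact one_div_ne_zero (mul_ne_zero (mul_ne_zero (by norm_num) hpi) hac)
    · exact div_ne_zero (by norm_num) (mul_ne_zero two_ne_zero hδc)
  exact h2 this.symm

lemma F_deriv (a δ : ℝ) (ha : 0 < a) (hδ : 0 < δ) (hδ1 : δ < 1 / 8) :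
    deriv (F δ a) 0 = deriv P 0 * Dsum a δ 0 + (1 / (4 * Real.pi * a) : ℂ) * deriv (G δ) 0 := by
  have h0 : -3 < (0 : ℂ).re := by simp
  have hP0 : P 0 = 0 := by simpa using P_zero 0
  have h1 := (P_diff 0).hasDerivAt.mul (D_an a δ ha hδ hδ1 0 h0).differentiableAt.hasDerivAt
  have h2 := ((G_an δ hδ 0 h0 zero_ne_one).differentiableAt.hasDerivAt).const_mul
    (1 / (4 * Real.pi * a) : ℂ)
  have h3 := (h1.add h2).deriv
  rw [hP0, zero_mul, add_zero] at h3
  exact h3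

lemma F_bigO (δ : ℝ) (hδ : 0 < δ) (hδ1 : δ < 1 / 8) :
    (fun a : ℝ => deriv (F δ a) 0) =O[atTop] (fun a : ℝ => 1 / a) := by
  set K : ℝ := ∑' k : ℕ, Real.exp (1 + 1) * ((k : ℝ) + 1) ^ (-2 + 8 * δ) with hK
  have hsum := summ (Real.exp (1 + 1)) (-2 + 8 * δ) (by linarith)
  have hK0 : 0 ≤ K := tsum_nonneg fun k => by positivity
  apply Asymptotics.IsBigO.of_bound (‖deriv P 0‖ * K + ‖deriv (G δ) 0‖)
  filter_upwards [eventually_ge_atTop (1 : ℝ)] with a ha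
  have ha0 : 0 < a := by linarith
  have hD : ‖Dsum a δ 0‖ ≤ 1 / a * K := by
    have hb : ‖Dsum a δ 0‖ ≤ ∑' k : ℕ, 1 / a * (Real.exp (1 + 1) * ((k : ℝ) + 1) ^ (-2 + 8 * δ)) := by
      apply tsum_of_norm_bounded (hsum.mul_left (1 / a)).hasSum
      intro k
      refine (dt_bound a δ ha0 hδ k 0 1 (by simp) (by simp)).trans ?_
      rw [mul_assoc]
      gcongr
      nlinarith
    rwa [tsum_mul_left] at hb
  have hc : ‖(1 / (4 * Real.pi * a) : ℂ)‖ ≤ 1 / a := by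
    have : (1 / (4 * Real.pi * a) : ℂ) = ((1 / (4 * Real.pi * a) : ℝ) : ℂ) := by push_cast; rfl
    rw [this, Complex.norm_real, Real.norm_of_nonneg (by positivity)]
    have := Real.pi_gt_three
    gcongr
    nlinarith
  rw [F_deriv a δ ha0 hδ hδ1, Real.norm_of_nonneg (by positivity)]
  calc _ ≤ ‖deriv P 0‖ * ‖Dsum a δ 0‖ + ‖(1 / (4 * Real.pi * a) : ℂ)‖ * ‖deriv (G δ) 0‖ := by
        refine (norm_add_le _ _).trans ?_
        rw [norm_mul, norm_mul]
    _ ≤ ‖deriv P 0‖ * (1 / a * K) + 1 / a * ‖deriv (G δ) 0‖ := by gcongr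
    _ = _ := by ring

end Cusp

/-- for fixed `δ ∈ (0,1/8)`, for every `a > 0` the series
`ζ_R(s) = Σ_{k≥1} R_k(s)` converges absolutely and locally uniformly on `Re(s) > 1`, its sum
extends to a meromorphic function on the half-plane `Re(s) > -3` whose only pole is at `s = 1`
(the extension is analytic precisely away from `s = 1`); in particular it is holomorphic at
`s = 0`, and its derivative at `0` satisfies `ζ_R'(0) = O(1/a)` as `a → ∞`; in particular
`ζ_R'(0) → 0` as `a → ∞`. -/
theorem statement4 (δ : ℝ) (hδ0 : 0 < δ) (hδ1 : δ < 1 / 8) :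
    ∃ F : ℝ → ℂ → ℂ,
      (∀ a : ℝ, 0 < a →
        (∀ s ∈ {s : ℂ | 1 < s.re},
          Summable (fun k : ℕ => ‖cuspR a δ (k + 1) s‖)) ∧
        TendstoLocallyUniformlyOn
          (fun (n : ℕ) (s : ℂ) => ∑ k ∈ Finset.range n, cuspR a δ (k + 1) s)
          (fun s : ℂ => ∑' k : ℕ, cuspR a δ (k + 1) s)
          atTop {s : ℂ | 1 < s.re} ∧
        MeromorphicOn (F a) {s : ℂ | -3 < s.re} ∧
        Set.EqOn (F a) (fun s : ℂ => ∑' k : ℕ, cuspR a δ (k + 1) s)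
          {s : ℂ | 1 < s.re} ∧
        (∀ s : ℂ, -3 < s.re → (AnalyticAt ℂ (F a) s ↔ s ≠ 1)) ∧
        AnalyticAt ℂ (F a) 0) ∧
      (fun a : ℝ => deriv (F a) 0) =O[atTop] (fun a : ℝ => 1 / a) ∧
      Tendsto (fun a : ℝ => deriv (F a) 0) atTop (nhds 0) := by
  have hO := Cusp.F_bigO δ hδ0 hδ1
  refine ⟨Cusp.F δ, fun a ha => ⟨?_, ?_, ?_, ?_, ?_, ?_⟩, hO, ?_⟩
  · intro s hs
    exact (Cusp.cusp_dom a δ ha hδ0).summable s hs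
  · exact (Cusp.cusp_dom a δ ha hδ0).locunif
  · intro s hs
    exact Cusp.F_mero a δ ha hδ0 hδ1 s hs
  · intro s hs
    exact Cusp.F_eq a δ ha hδ0 hδ1 s hs
  · intro s hs
    constructor
    · rintro h rfl
      exact Cusp.F_not a δ ha hδ0 hδ1 h
    · exact Cusp.F_an a δ ha hδ0 hδ1 s hs
  · exact Cusp.F_an a δ ha hδ0 hδ1 0 (by simp) zero_ne_one
  · refine hO.trans_tendsto ?_
    simpa only [one_div] using tendsto_inv_atTop_zero
end

section
/- Let η > 0 and let ω ≥ 1 be an integer. Let f : (0,η] × ℝ → ℝ be bounded, 2π-periodic in the second variable, continuously differentiable, with f(η,θ) = 0 for all θ, not Lebesgue-almost everywhere zero on (0,η] × [0,2π], and such that ∫₀^{2π} ∫₀^{η} ((∂_ρ f)² + ω² sinh(ρ)^{-2} (∂_θ f)²) · ω^{-1} sinh(ρ) dρ dθ < ∞. Then (1/4) · ∫₀^{2π} ∫₀^{η} f² · ω^{-1} sinh(ρ) dρ dθ < ∫₀^{2π} ∫₀^{η} ((∂_ρ f)² + ω² sinh(ρ)^{-2} (∂_θ f)²) · ω^{-1}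 sinh(ρ) dρ dθ. (This is the variational form of the statement that the smallest eigenvalue of the Dirichlet laplacian on the model hyperbolic cone is strictly bigger than 1/4.) -/
open MeasureTheory Filter Real


/-- One-dimensional inequality on a ray of the cone. -/
lemma slice_nonneg (η : ℝ) (hη : 0 < η) (w : ℝ) (hw : 0 < w) (g F : ℝ → ℝ)
    (C : ℝ) (hb : ∀ r ∈ Set.Ioc 0 η, |g r| ≤ C)
    (hcont : ContinuousOn g (Set.Ioc 0 η))
    (hd : ∀ r ∈ Set.Ioo 0 η, DifferentiableAt ℝ g r)
    (h0 : g η = 0)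
    (hF : IntegrableOn F (Set.Ioc 0 η))
    (hle : ∀ r ∈ Set.Ioo 0 η, (deriv g r ^ 2 - 1 / 4 * g r ^ 2) * (sinh r / w)
      - 1 / 2 * exp (-r) * g r ^ 2 / w ≤ F r) :
    0 ≤ ∫ r in Set.Ioc 0 η, F r := by
  have key := intervalIntegral.sub_le_integral_of_hasDeriv_right_of_le (a := 0) (b := η)
    (g := fun r => - (1 / 2) * (sinh r * g r ^ 2) / w)
    (g' := fun r => - (1 / 2) * (cosh r * g r ^ 2 + sinh r * (2 * g r * deriv g r)) / w)
    (φ := F) hη.le ?_ ?_ ?_ ?_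
  · rw [intervalIntegral.integral_of_le hη.le] at key
    simpa [h0] using key
  · have hC : ContinuousOn (fun r => sinh r * g r ^ 2) (Set.Icc 0 η) := by
      intro x hx
      rcases eq_or_lt_of_le hx.1 with h | h
      · subst h
        have : Tendsto (fun r => sinh r * g r ^ 2) (nhdsWithin 0 (Set.Icc 0 η)) (nhds 0) := by
          have h1 : Tendsto (fun r => sinh r * C ^ 2) (nhdsWithin 0 (Set.Icc 0 η)) (nhds 0) := by
            have : Continuous (fun r => sinh r * C ^ 2) := by fun_prop
            simpa using (this.tendsto 0).mono_left nhdsWithin_le_nhds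
          refine squeeze_zero' ?_ ?_ h1
          · filter_upwards [self_mem_nhdsWithin] with r hr
            exact mul_nonneg (sinh_nonneg_iff.2 hr.1) (sq_nonneg _)
          · filter_upwards [self_mem_nhdsWithin] with r hr
            rcases eq_or_lt_of_le hr.1 with h' | h'
            · subst h'; simp
            · refine mul_le_mul_of_nonneg_left ?_ (sinh_nonneg_iff.2 hr.1)
              exact sq_le_sq' (abs_le.1 (hb r ⟨h', hr.2⟩)).1 (abs_le.1 (hb r ⟨h', hr.2⟩)).2
        simpa [ContinuousWithinAt] using this
      · have h1 : ContinuousWithinAt g (Set.Icc 0 η) x := by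
          refine (hcont x ⟨h, hx.2⟩).mono_of_mem_nhdsWithin ?_
          filter_upwards [self_mem_nhdsWithin, mem_nhdsWithin_of_mem_nhds (Ioi_mem_nhds h)] with r hr hr'
          exact ⟨hr', hr.2⟩
        exact (continuous_sinh.continuousWithinAt).mul (h1.pow 2)
    exact (hC.const_smul (- (1 / 2) : ℝ)).div_const w
  · intro x hx
    have h1 := (hd x hx).hasDerivAt
    have h2 := (((hasDerivAt_sinh x).mul (h1.pow 2)).const_mul (- (1 / 2))).div_const w
    refine (h2.congr_deriv ?_).hasDerivWithinAt
    simp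
  · rw [integrableOn_Icc_iff_integrableOn_Ioc]; exact hF
  · intro x hx
    refine le_trans ?_ (hle x hx)
    have hs : 0 < sinh x := sinh_pos_iff.2 hx.1
    have e : exp (-x) = cosh x - sinh x := (cosh_sub_sinh x).symm
    rw [e]
    have : 0 ≤ sinh x * (deriv g x + 1 / 2 * g x) ^ 2 / w := by positivity
    have e2 : (deriv g x ^ 2 - 1 / 4 * g x ^ 2) * (sinh x / w)
      - 1 / 2 * (cosh x - sinh x) * g x ^ 2 / w
      - (- (1 / 2) * (cosh x * g x ^ 2 + sinh x * (2 * g x * deriv g x)) / w)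
      = sinh x * (deriv g x + 1 / 2 * g x) ^ 2 / w := by
      field_simp
      ring
    linarith

/-- variational form of the fact that the smallest Dirichlet eigenvalue of the
laplacian on the model hyperbolic cone `(0,η] × [0,2π]` with metric
`dρ² + ω⁻² sinh(ρ)² dθ²` is strictly bigger than `1/4`.  For a bounded, `2π`-periodic (in `θ`),
continuously differentiable function `f` vanishing at `ρ = η`, not almost everywhere zero, and
with finite Dirichlet energy, one has
`(1/4)·∫∫ f² ω⁻¹ sinh ρ dρ dθ < ∫∫ ((∂_ρ f)² + ω² sinh(ρ)⁻² (∂_θ f)²) ω⁻¹ sinh ρ dρ dθ`. -/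
theorem statement5 (η : ℝ) (hη : 0 < η) (ω : ℕ) (hω : 1 ≤ ω) (f : ℝ × ℝ → ℝ)
    (hbdd : ∃ C : ℝ, ∀ p : ℝ × ℝ, p.1 ∈ Set.Ioc 0 η → |f p| ≤ C)
    (hper : ∀ ρ θ : ℝ, f (ρ, θ + 2 * π) = f (ρ, θ))
    (hC1 : ContDiffOn ℝ 1 f (Set.Ioc 0 η ×ˢ (Set.univ : Set ℝ)))
    (hbound : ∀ θ : ℝ, f (η, θ) = 0)
    (hne : ¬ (∀ᵐ p ∂(volume.restrict (Set.Ioc 0 η ×ˢ Set.Icc 0 (2 * π))), f p = 0))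
    (henergy : IntegrableOn
      (fun p : ℝ × ℝ =>
        ((deriv (fun r => f (r, p.2)) p.1) ^ 2 +
          (ω : ℝ) ^ 2 / Real.sinh p.1 ^ 2 * (deriv (fun t => f (p.1, t)) p.2) ^ 2) *
          (Real.sinh p.1 / ω))
      (Set.Ioc 0 η ×ˢ Set.Icc 0 (2 * π)) volume) :
    (1 / 4) * ∫ p in Set.Ioc 0 η ×ˢ Set.Icc 0 (2 * π),
        f p ^ 2 * (Real.sinh p.1 / ω) <
      ∫ p in Set.Ioc 0 η ×ˢ Set.Icc 0 (2 * π),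
        ((deriv (fun r => f (r, p.2)) p.1) ^ 2 +
          (ω : ℝ) ^ 2 / Real.sinh p.1 ^ 2 * (deriv (fun t => f (p.1, t)) p.2) ^ 2) *
          (Real.sinh p.1 / ω) := by
  obtain ⟨C, hC⟩ := hbdd
  have hw : (0 : ℝ) < ω := by exact_mod_cast hω
  set S : Set (ℝ × ℝ) := Set.Ioc 0 η ×ˢ Set.Icc 0 (2 * π) with hS
  have hSm : MeasurableSet S := measurableSet_Ioc.prod measurableSet_Icc
  have hSsub : S ⊆ Set.Ioc 0 η ×ˢ (Set.univ : Set ℝ) := Set.prod_mono le_rfl (Set.subset_univ _)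
  have hcontS : ContinuousOn f S := hC1.continuousOn.mono hSsub
  have hSfin : volume S < ⊤ :=
    ((Metric.isBounded_Ioc 0 η).prod (Metric.isBounded_Icc 0 (2 * π))).measure_lt_top
  have hint : ∀ k : ℝ → ℝ, Continuous k → IntegrableOn (fun p : ℝ × ℝ => f p ^ 2 * k p.1) S := by
    intro k hk
    obtain ⟨M, hM⟩ := (isCompact_Icc (a := (0 : ℝ)) (b := η)).exists_bound_of_continuousOn
      hk.continuousOn
    refine IntegrableOn.of_bound hSfin ?_ (C ^ 2 * M) ?_
    · exact ((hcontS.pow 2).mul (hk.comp continuous_fst).continuousOn).aestronglyMeasurable hSm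
    · filter_upwards [ae_restrict_mem hSm] with p hp
      rw [norm_mul, norm_pow]
      exact mul_le_mul (pow_le_pow_left₀ (norm_nonneg _) (hC p hp.1) 2)
        (hM p.1 ⟨hp.1.1.le, hp.1.2⟩) (norm_nonneg _) (by positivity)
  have hi1 := hint (fun r => Real.sinh r / ω) (by fun_prop)
  have hi2 := hint (fun r => 1 / 2 * Real.exp (-r) / ω) (by fun_prop)
  have hpos : 0 < ∫ p in S, f p ^ 2 * (1 / 2 * Real.exp (-p.1) / ω) := by
    have hnn : ∀ p : ℝ × ℝ, 0 ≤ f p ^ 2 * (1 / 2 * Real.exp (-p.1) / ω) := fun p => by positivity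
    refine lt_of_le_of_ne (integral_nonneg hnn) fun h => hne ?_
    have := (integral_eq_zero_iff_of_nonneg hnn hi2).1 h.symm
    filter_upwards [this] with p hp
    have h3 : (1 / 2 * Real.exp (-p.1) / (ω : ℝ)) ≠ 0 := by positivity
    simpa [h3, hw.ne'] using hp
  have hiF := (henergy.sub (hi1.const_mul (1 / 4))).sub hi2
  have hI : 0 ≤ ∫ p in S, (((((deriv (fun r => f (r, p.2)) p.1) ^ 2 +
          (ω : ℝ) ^ 2 / Real.sinh p.1 ^ 2 * (deriv (fun t => f (p.1, t)) p.2) ^ 2) *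
          (Real.sinh p.1 / ω)) - 1 / 4 * (f p ^ 2 * (Real.sinh p.1 / ω)))
          - f p ^ 2 * (1 / 2 * Real.exp (-p.1) / ω)) := by
    have hvol : (volume : Measure (ℝ × ℝ)).restrict S =
        (volume.restrict (Set.Ioc 0 η)).prod (volume.restrict (Set.Icc 0 (2 * π))) := by
      rw [Measure.prod_restrict]; rfl
    rw [IntegrableOn, hvol] at hiF
    rw [hvol]
    refine le_of_le_of_eq ?_ (integral_prod_symm _ hiF).symm
    refine integral_nonneg_of_ae ?_
    filter_upwards [hiF.prod_left_ae] with θ hθ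
    refine slice_nonneg η hη ω hw (fun r => f (r, θ)) _ C (fun r hr => hC _ hr) ?_ ?_
      (hbound θ) hθ ?_
    · exact hC1.continuousOn.comp (by fun_prop) (fun r hr => ⟨hr, trivial⟩)
    · intro r hr
      have h1 : DifferentiableAt ℝ f (r, θ) := by
        refine (hC1.differentiableOn one_ne_zero).differentiableAt ?_
        exact prod_mem_nhds (Ioc_mem_nhds hr.1 hr.2) univ_mem
      exact h1.comp r (by fun_prop)
    · intro r hr
      have hs : 0 < Real.sinh r := Real.sinh_pos_iff.2 hr.1
      have : 0 ≤ (ω : ℝ) ^ 2 / Real.sinh r ^ 2 * (deriv (fun t => f (r, t)) θ) ^ 2 *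
          (Real.sinh r / ω) := by positivity
      simp only [Pi.sub_apply]
      refine le_of_sub_nonneg (this.trans (le_of_eq ?_))
      ring
  have e1 := integral_sub (henergy.sub (hi1.const_mul (1 / 4))) hi2
  have e2 := integral_sub henergy (hi1.const_mul (1 / 4))
  rw [integral_const_mul] at e2
  simp only [Pi.sub_apply] at e1
  rw [e1, e2] at hI
  linarith
end

section
/- Let ω ≥ 1 be an integer and δ ∈ (0,1/8) be fixed, and let η > 0. The series ζ_{E₀}(s) = Σ_{k≥1} E_{0,k}(s) converges absolutely and locally uniformly on the strip {s ∈ ℂ : 1 < Re(s) < 2}, and its sum extends to a meromorphic function on ℂ which is holomorphic at s = 0. Moreover, for fixed ω and δ, the derivative at 0 of this extension satisfies ζ_{E₀}'(0) = ζ(0)·log(ω) - ζ'(0) - ζ(0)·log(η) + o(1) as η → 0⁺. -/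
open MeasureTheory Filter

/-- The error integral `E_{0,k}(s)` for the model hyperbolic cone of angle `2π/ω` and
boundary parameter `η`:
`E_{0,k}(s) = -(sin(πs)/π) · ∫_{k^{δ-1}/ω}^{∞} (k²ω²u² - 1/4)^{-s} · u/(u² + sinh(η)^{-2}) du`. -/
noncomputable def coneE0 (ω : ℕ) (η δ : ℝ) (k : ℕ) (s : ℂ) : ℂ :=
  -(Complex.sin ((Real.pi : ℂ) * s) / (Real.pi : ℂ)) *
    ∫ u in Set.Ioi ((k : ℝ) ^ (δ - 1) / ω),
      (((k : ℝ) ^ 2 * (ω : ℝ) ^ 2 * u ^ 2 - 1 / 4 : ℝ) : ℂ) ^ (-s) *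
        ((u / (u ^ 2 + (Real.sinh η)⁻¹ ^ 2) : ℝ) : ℂ)

lemma aux_zeta_mero (z : ℂ) : MeromorphicAt riemannZeta z := by
  by_cases hz : z = 1
  · subst hz
    refine ⟨2, ?_⟩
    apply Complex.analyticAt_of_differentiable_on_punctured_nhds_of_continuousAt
    · filter_upwards [self_mem_nhdsWithin] with s hs
      have : s ≠ 1 := hs
      exact ((differentiableAt_id.sub_const _).pow 2).smul (differentiableAt_riemannZeta this)
    · rw [continuousAt_iff_punctured_nhds]
      have h1 : Tendsto (fun s : ℂ => (s - 1)) (nhdsWithin 1 {1}ᶜ) (nhds 0) := by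
        have : Tendsto (fun s : ℂ => (s - 1)) (nhds 1) (nhds (1 - 1)) :=
          (continuous_id.sub continuous_const).tendsto 1
        rw [sub_self] at this
        exact this.mono_left nhdsWithin_le_nhds
      have := h1.mul riemannZeta_residue_one
      simp only [sub_self, ne_eq, OfNat.ofNat_ne_zero, not_false_eq_true, zero_pow, zero_smul]
      simp only [mul_one] at this
      refine this.congr fun s => ?_
      simp [pow_two, mul_assoc]
  · have : ∀ᶠ s in nhds z, DifferentiableAt ℂ riemannZeta s := by
      filter_upwards [isOpen_ne.mem_nhds hz] with s hs using differentiableAt_riemannZeta hs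
    exact (Complex.analyticAt_iff_eventually_differentiableAt.2 this).meromorphicAt

lemma aux_zeta_affine_mero (a c : ℂ) (z : ℂ) :
    MeromorphicAt (fun s => riemannZeta (a * s + c)) z := by
  have h : AnalyticAt ℂ (fun s : ℂ => a * s + c) z := by fun_prop
  exact MeromorphicAt.comp_analyticAt (f := riemannZeta) (g := fun s : ℂ => a * s + c)
    (aux_zeta_mero (a * z + c)) h

/-- gluing of meromorphic functions on increasing balls -/
lemma aux_glue (M : ℕ → ℂ → ℂ) (R : ℕ → ℝ) (hR0 : ∀ n, 3 ≤ R n) (hR : ∀ n : ℕ, (n : ℝ) < R n) (G : ℂ → ℂ)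
    (hM : ∀ n, MeromorphicOn (M n) (Metric.ball 0 (R n)))
    (hG : ∀ n, ∀ s ∈ Metric.ball (0 : ℂ) (R n), 1 < s.re → s.re < 2 → M n s = G s) :
    ∃ F : ℂ → ℂ, MeromorphicOn F Set.univ ∧
      ∀ n, ∀ s ∈ Metric.ball (0 : ℂ) (R n), AnalyticAt ℂ (M n) s → F =ᶠ[nhds s] M n := by
  have key : ∀ n m, ∀ s ∈ Metric.ball (0 : ℂ) (R n), s ∈ Metric.ball (0 : ℂ) (R m) →
      M n =ᶠ[nhdsWithin s {s}ᶜ] M m := by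
    intro n m s hn hm
    set ρ := min (R n) (R m) with hρ
    have hmer : MeromorphicOn (M n - M m) (Metric.ball 0 ρ) := by
      apply MeromorphicOn.sub
      · exact fun z hz => hM n z (Metric.ball_subset_ball (min_le_left _ _) hz)
      · exact fun z hz => hM m z (Metric.ball_subset_ball (min_le_right _ _) hz)
    have hsρ : s ∈ Metric.ball (0 : ℂ) ρ := by
      simp only [Metric.mem_ball, hρ, lt_min_iff] at *; exact ⟨hn, hm⟩
    have hρ3 : (3 : ℝ) ≤ ρ := le_min (hR0 n) (hR0 m)
    have hx : ((3 / 2 : ℝ) : ℂ) ∈ Metric.ball (0 : ℂ) ρ := by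
      rw [mem_ball_zero_iff, Complex.norm_real, Real.norm_eq_abs, abs_of_pos (by norm_num)]
      linarith
    have htop : meromorphicOrderAt (M n - M m) ((3 / 2 : ℝ) : ℂ) = ⊤ := by
      rw [meromorphicOrderAt_eq_top_iff]
      apply Filter.Eventually.filter_mono nhdsWithin_le_nhds
      have o1 : IsOpen {s : ℂ | 1 < s.re ∧ s.re < 2} :=
        (isOpen_lt continuous_const Complex.continuous_re).inter
          (isOpen_lt Complex.continuous_re continuous_const)
      filter_upwards [Metric.isOpen_ball.mem_nhds hx, o1.mem_nhds
        (show ((3 / 2 : ℝ) : ℂ) ∈ {s : ℂ | 1 < s.re ∧ s.re < 2} by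
          simp only [Set.mem_ofPred_eq, Complex.ofReal_re]; norm_num)] with z hz1 hz2
      have e1 := hG n z (Metric.ball_subset_ball (min_le_left _ _) hz1) hz2.1 hz2.2
      have e2 := hG m z (Metric.ball_subset_ball (min_le_right _ _) hz1) hz2.1 hz2.2
      simp [e1, e2]
    have hs_top : meromorphicOrderAt (M n - M m) s = ⊤ := by
      by_contra hne
      exact (hmer.meromorphicOrderAt_ne_top_of_isPreconnected (x := s)
        (convex_ball (0 : ℂ) ρ).isPreconnected hsρ hx hne) htop
    rw [meromorphicOrderAt_eq_top_iff] at hs_top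
    filter_upwards [hs_top] with z hz
    simpa [sub_eq_zero] using hz
  let ι : ℂ → ℕ := fun s => ⌈‖s‖⌉₊
  have hι : ∀ s, s ∈ Metric.ball (0 : ℂ) (R (ι s)) := by
    intro s
    rw [mem_ball_zero_iff]
    exact (Nat.le_ceil _).trans_lt (hR _)
  let F0 : ℂ → ℂ := fun s => M (ι s) s
  have hF0 : ∀ n, ∀ s ∈ Metric.ball (0 : ℂ) (R n), F0 =ᶠ[nhdsWithin s {s}ᶜ] M n := by
    intro n s hs
    have hall : ∀ᶠ z in nhdsWithin s {s}ᶜ, ∀ m ∈ Finset.range (⌈‖s‖ + 1⌉₊ + 1),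
        s ∈ Metric.ball (0 : ℂ) (R m) → M m z = M n z := by
      rw [Filter.eventually_all_finset]
      intro m _
      by_cases hm : s ∈ Metric.ball (0 : ℂ) (R m)
      · filter_upwards [key m n s hm hs] with z hz _ using hz
      · filter_upwards with z h using absurd h hm
    have hnear : ∀ᶠ z in nhdsWithin s {s}ᶜ, ‖z‖ < ‖s‖ + 1 :=
      Filter.Eventually.filter_mono nhdsWithin_le_nhds
        (continuous_norm.continuousAt.eventually_lt continuousAt_const (by linarith))
    have hge : ∀ᶠ z in nhdsWithin s {s}ᶜ, s ∈ Metric.ball (0 : ℂ) (R (ι z)) := by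
      apply Filter.Eventually.filter_mono nhdsWithin_le_nhds
      have : ∀ᶠ z in nhds s, ((ι s : ℝ) - 1 < ‖z‖ ∨ ι s = 0) := by
        by_cases h0 : ι s = 0
        · filter_upwards with z using Or.inr h0
        · have : (ι s : ℝ) - 1 < ‖s‖ := by
            have := Nat.ceil_lt_add_one (norm_nonneg s)
            simp only [ι]; linarith
          filter_upwards [continuousAt_const.eventually_lt continuous_norm.continuousAt this]
            with z hz using Or.inl hz
      filter_upwards [this] with z hz
      rw [mem_ball_zero_iff]
      have hle : ι s ≤ ι z := by
        rcases hz with hz | hz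
        · have h1 : (ι s : ℝ) - 1 < ι z := hz.trans_le (Nat.le_ceil _)
          have : (ι s : ℝ) < ((ι z + 1 : ℕ) : ℝ) := by push_cast; linarith
          have := Nat.cast_lt.1 this
          omega
        · omega
      calc ‖s‖ ≤ ι s := Nat.le_ceil _
        _ ≤ ι z := by exact_mod_cast hle
        _ < R (ι z) := hR _
    filter_upwards [hall, hnear, hge] with z h1 h2 h3
    refine h1 (ι z) ?_ h3
    rw [Finset.mem_range, Nat.lt_succ_iff]
    exact Nat.ceil_mono h2.le
  have hF0m : MeromorphicOn F0 Set.univ := fun s _ =>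
    (hM (ι s) s (hι s)).congr (hF0 (ι s) s (hι s)).symm
  refine ⟨toMeromorphicNFOn F0 Set.univ, (meromorphicNFOn_toMeromorphicNFOn _ _).meromorphicOn, ?_⟩
  intro n s hs ha
  have h1 := hF0m.toMeromorphicNFOn_eq_self_on_nhdsNE (Set.mem_univ s)
  have h2 : toMeromorphicNFOn F0 Set.univ =ᶠ[nhdsWithin s {s}ᶜ] M n := h1.trans (hF0 n s hs)
  exact (MeromorphicNFAt.eventuallyEq_nhdsNE_iff_eventuallyEq_nhds
    (meromorphicNFOn_toMeromorphicNFOn F0 Set.univ (Set.mem_univ s)) ha.meromorphicNFAt).1 h2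

/-- one-sided Lipschitz bound at zero -/
lemma aux_deriv_bound (f : ℂ → ℂ) (hf : DifferentiableAt ℂ f 0) (K : ℝ)
    (h : ∀ t : ℝ, 0 < t → t < 1 / 4 → ‖f (-(t : ℂ))‖ ≤ K * t) :
    f 0 = 0 ∧ ‖deriv f 0‖ ≤ K := by
  have hmap : Tendsto (fun t : ℝ => -(t : ℂ)) (nhdsWithin 0 (Set.Ioi 0)) (nhdsWithin 0 {0}ᶜ) := by
    apply tendsto_nhdsWithin_of_tendsto_nhds_of_eventually_within
    · have : Tendsto (fun t : ℝ => -(t : ℂ)) (nhds 0) (nhds (-((0 : ℝ) : ℂ))) :=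
        (Complex.continuous_ofReal.neg).tendsto 0
      simp only [Complex.ofReal_zero, neg_zero] at this
      exact this.mono_left nhdsWithin_le_nhds
    · filter_upwards [self_mem_nhdsWithin] with t ht
      have : (0 : ℝ) < t := ht
      simp [this.ne']
  have hsmall : ∀ᶠ t : ℝ in nhdsWithin 0 (Set.Ioi 0), 0 < t ∧ t < 1 / 4 := by
    filter_upwards [Ioo_mem_nhdsGT (show (0 : ℝ) < 1 / 4 by norm_num)] with t ht using ht
  have h0 : f 0 = 0 := by
    have h1 : Tendsto (fun t : ℝ => f (-(t : ℂ))) (nhdsWithin 0 (Set.Ioi 0)) (nhds (f 0)) :=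
      hf.continuousAt.tendsto.comp (hmap.mono_right nhdsWithin_le_nhds)
    have h2 : Tendsto (fun t : ℝ => f (-(t : ℂ))) (nhdsWithin 0 (Set.Ioi 0)) (nhds 0) := by
      apply squeeze_zero_norm' (a := fun t => K * t)
      · filter_upwards [hsmall] with t ht using h t ht.1 ht.2
      · have : Tendsto (fun t : ℝ => K * t) (nhds 0) (nhds (K * 0)) :=
          (continuous_const.mul continuous_id).tendsto 0
        rw [mul_zero] at this
        exact this.mono_left nhdsWithin_le_nhds
    exact tendsto_nhds_unique h1 h2
  refine ⟨h0, ?_⟩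
  have h1 := (hasDerivAt_iff_tendsto_slope.1 hf.hasDerivAt).comp hmap
  refine le_of_tendsto h1.norm ?_
  filter_upwards [hsmall] with t ht
  simp only [Function.comp, slope_def_field, h0, sub_zero, norm_div, norm_neg, Complex.norm_real,
    Real.norm_eq_abs, abs_of_pos ht.1]
  rw [div_le_iff₀ ht.1]
  exact h t ht.1 ht.2

/-- binomial coefficients as functions of the exponent -/
noncomputable def binC : ℕ → ℂ → ℂ
  | 0 => fun _ => 1
  | (j + 1) => fun w => w * binC j (w - 1) / ((j : ℂ) + 1)

lemma binC_diff (j : ℕ) : Differentiable ℂ (binC j) := by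
  induction j with
  | zero => exact differentiable_const _
  | succ j ih =>
    have : Differentiable ℂ (fun w : ℂ => binC j (w - 1)) :=
      ih.comp (differentiable_id.sub_const 1)
    exact (differentiable_id.mul this).div_const _

lemma binC_taylor (Y : ℝ) (hY0 : 0 ≤ Y) (n : ℕ) : ∀ R : ℝ, ∃ C : ℝ, 0 ≤ C ∧ ∀ w : ℂ, ‖w‖ ≤ R → ∀ y : ℝ, -(1 / 4) ≤ y →
    y ≤ Y → ‖((1 + y : ℝ) : ℂ) ^ w - ∑ i ∈ Finset.range n, binC i w * (y : ℂ) ^ i‖ ≤ C * |y| ^ n := by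
  induction n with
  | zero =>
    intro R
    refine ⟨Real.exp (R * (1 + |Y|)), (Real.exp_pos _).le, ?_⟩
    intro w hw y hy1 hy2
    have hpos : 0 < 1 + y := by linarith
    simp only [Finset.range_zero, Finset.sum_empty, sub_zero, pow_zero, mul_one]
    rw [Complex.norm_cpow_eq_rpow_re_of_pos hpos, Real.rpow_def_of_pos hpos]
    apply Real.exp_le_exp.2
    have hlog : |Real.log (1 + y)| ≤ 1 + |Y| := by
      rw [abs_le]
      constructor
      · have := Real.one_sub_inv_le_log_of_pos hpos
        have h2 : (1 + y)⁻¹ ≤ 4 / 3 := by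
          rw [inv_le_comm₀ hpos (by norm_num)]; linarith
        have := abs_nonneg Y
        linarith
      · have := Real.log_le_sub_one_of_pos hpos
        have := le_abs_self Y
        linarith
    calc Real.log (1 + y) * w.re ≤ |Real.log (1 + y) * w.re| := le_abs_self _
      _ = |w.re| * |Real.log (1 + y)| := by rw [abs_mul, mul_comm]
      _ ≤ R * (1 + |Y|) := by
        apply mul_le_mul ((Complex.abs_re_le_norm w).trans hw) hlog (abs_nonneg _)
        exact (norm_nonneg w).trans hw
  | succ n ih =>
    intro R
    obtain ⟨C, hC0, hC⟩ := ih (R + 1)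
    refine ⟨|R| * C, by positivity, ?_⟩
    intro w hw y hy1 hy2
    let f : ℝ → ℂ := fun t => ((1 + t : ℝ) : ℂ) ^ w -
      ∑ i ∈ Finset.range (n + 1), binC i w * (t : ℂ) ^ i
    let f' : ℝ → ℂ := fun t => w * (((1 + t : ℝ) : ℂ) ^ (w - 1) -
      ∑ i ∈ Finset.range n, binC i (w - 1) * (t : ℂ) ^ i)
    have hpos : ∀ t ∈ Set.uIcc 0 y, 0 < 1 + t := by
      intro t ht
      rw [Set.mem_uIcc] at ht
      rcases ht with ht | ht <;> linarith [ht.1]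
    have hder : ∀ t ∈ Set.uIcc 0 y, HasDerivWithinAt f (f' t) (Set.uIcc 0 y) t := by
      intro t ht
      apply HasDerivAt.hasDerivWithinAt
      have h1 : HasDerivAt (fun t : ℝ => ((1 + t : ℝ) : ℂ) ^ w)
          (w * ((1 + t : ℝ) : ℂ) ^ (w - 1)) t := by
        have hb : HasDerivAt (fun z : ℂ => 1 + z) 1 (t : ℂ) := (hasDerivAt_id (t : ℂ)).const_add 1
        have hm : (1 + (t : ℂ)) ∈ Complex.slitPlane := Or.inl (by
          simpa using hpos t ht)
        have := (hb.cpow_const (c := w) hm).comp_ofReal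
        simpa using this
      have h2 : HasDerivAt (fun t : ℝ => ∑ i ∈ Finset.range (n + 1), binC i w * (t : ℂ) ^ i)
          (∑ i ∈ Finset.range (n + 1), binC i w * ((i : ℂ) * (t : ℂ) ^ (i - 1))) t := by
        apply HasDerivAt.fun_sum
        intro i _
        apply HasDerivAt.const_mul
        have hb : HasDerivAt (fun t : ℝ => (t : ℂ)) ((1 : ℝ) : ℂ) t := (hasDerivAt_id t).ofReal_comp
        have := hb.fun_pow i
        simpa using this
      have h3 := h1.sub h2
      have e : f' t = w * ((1 + t : ℝ) : ℂ) ^ (w - 1) -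
          ∑ i ∈ Finset.range (n + 1), binC i w * ((i : ℂ) * (t : ℂ) ^ (i - 1)) := by
        rw [Finset.sum_range_succ']
        simp only [f', mul_sub, Finset.mul_sum]
        simp only [Nat.cast_zero, zero_mul, mul_zero, add_zero, Nat.add_sub_cancel]
        congr 1
        apply Finset.sum_congr rfl
        intro i _
        have : ((i : ℂ) + 1) ≠ 0 := by exact_mod_cast Nat.succ_ne_zero i
        simp only [binC]
        push_cast
        field_simp
      rw [e]
      exact h3
    have hbd : ∀ t ∈ Set.uIcc 0 y, ‖f' t‖ ≤ |R| * C * |y| ^ n := by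
      intro t ht
      have hty : |t| ≤ |y| := by
        rw [Set.mem_uIcc] at ht
        rcases ht with ht | ht
        · rw [abs_of_nonneg ht.1, abs_of_nonneg (ht.1.trans ht.2)]; exact ht.2
        · rw [abs_of_nonpos ht.2, abs_of_nonpos (ht.1.trans ht.2)]; linarith [ht.1]
      have ht1 : -(1 / 4) ≤ t ∧ t ≤ Y := by
        rw [Set.mem_uIcc] at ht
        rcases ht with ht | ht
        · exact ⟨by linarith [ht.1], ht.2.trans hy2⟩
        · exact ⟨by linarith [ht.1], ht.2.trans hY0⟩
      have hR0 : 0 ≤ R := (norm_nonneg _).trans hw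
      simp only [f']
      rw [norm_mul, mul_assoc]
      apply mul_le_mul (hw.trans (le_abs_self _)) _ (norm_nonneg _) (abs_nonneg _)
      have hw1 : ‖w - 1‖ ≤ R + 1 := (norm_sub_le _ _).trans (by simpa using hw)
      exact (hC (w - 1) hw1 t ht1.1 ht1.2).trans (by gcongr)
    have hmv := (convex_uIcc (0 : ℝ) y).norm_image_sub_le_of_norm_hasDerivWithin_le hder hbd
      Set.left_mem_uIcc Set.right_mem_uIcc
    have hf0 : f 0 = 0 := by
      simp only [f]
      rw [Finset.sum_range_succ']
      simp [binC]
    rw [hf0, sub_zero, sub_zero, Real.norm_eq_abs] at hmv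
    rw [pow_succ, ← mul_assoc]
    exact hmv

/-- uniform asymptotic expansion in powers of `(k+1)^{-θ}` with entire coefficients -/
def HasExp (θ : ℝ) (X x : ℕ → ℂ → ℂ) : Prop :=
  (∀ k, Differentiable ℂ (X k)) ∧ (∀ i, Differentiable ℂ (x i)) ∧
  ∀ (R : ℝ) (n : ℕ), ∃ C : ℝ, 0 ≤ C ∧ ∀ (k : ℕ) (s : ℂ), ‖s‖ ≤ R →
    ‖X k s - ∑ i ∈ Finset.range n, x i s * ((k : ℂ) + 1) ^ ((-(θ * i) : ℝ) : ℂ)‖ ≤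
      C * ((k : ℝ) + 1) ^ (-(θ * n))

lemma kpos (k : ℕ) : (0 : ℝ) < (k : ℝ) + 1 := by positivity

lemma kone (k : ℕ) : (1 : ℝ) ≤ (k : ℝ) + 1 := by
  have : (0 : ℝ) ≤ k := Nat.cast_nonneg k
  linarith

lemma kne (k : ℕ) : ((k : ℂ) + 1) ≠ 0 := by exact_mod_cast Nat.succ_ne_zero k

lemma knorm (k : ℕ) (z : ℂ) : ‖((k : ℂ) + 1) ^ z‖ = ((k : ℝ) + 1) ^ z.re := by
  have := Complex.norm_cpow_eq_rpow_re_of_pos (kpos k) z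
  push_cast at this
  exact this

lemma kofReal (k : ℕ) (a : ℝ) : ((((k : ℝ) + 1) ^ a : ℝ) : ℂ) = ((k : ℂ) + 1) ^ (a : ℂ) := by
  rw [Complex.ofReal_cpow (kpos k).le]
  push_cast
  rfl

lemma exp_binom (θ ε : ℝ) (hθ : 0 ≤ θ) (hε : -(1 / 4) ≤ ε) (w : ℂ → ℂ) (hw : Differentiable ℂ w) :
    HasExp θ (fun k s => ((1 + ε * ((k : ℝ) + 1) ^ (-θ) : ℝ) : ℂ) ^ (w s))
      (fun i s => binC i (w s) * (ε : ℂ) ^ i) := by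
  have hu : ∀ k : ℕ, 0 < ((k : ℝ) + 1) ^ (-θ) ∧ ((k : ℝ) + 1) ^ (-θ) ≤ 1 := fun k =>
    ⟨Real.rpow_pos_of_pos (kpos k) _, Real.rpow_le_one_of_one_le_of_nonpos (kone k) (by linarith)⟩
  have hy : ∀ k : ℕ, -(1 / 4) ≤ ε * ((k : ℝ) + 1) ^ (-θ) ∧ ε * ((k : ℝ) + 1) ^ (-θ) ≤ |ε| := by
    intro k
    obtain ⟨h1, h2⟩ := hu k
    constructor
    · by_cases h : 0 ≤ ε
      · have : 0 ≤ ε * ((k : ℝ) + 1) ^ (-θ) := by positivity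
        linarith
      · nlinarith
    · calc ε * ((k : ℝ) + 1) ^ (-θ) ≤ |ε| * ((k : ℝ) + 1) ^ (-θ) := by gcongr; exact le_abs_self _
        _ ≤ |ε| * 1 := by gcongr
        _ = |ε| := mul_one _
  refine ⟨?_, ?_, ?_⟩
  · intro k s
    have : ((1 + ε * ((k : ℝ) + 1) ^ (-θ) : ℝ) : ℂ) ≠ 0 := by
      have := (hy k).1
      exact_mod_cast (show 1 + ε * ((k : ℝ) + 1) ^ (-θ) ≠ 0 by linarith)
    exact (hw s).const_cpow (Or.inl this)
  · intro i
    exact ((binC_diff i).comp hw).mul_const _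
  · intro R n
    obtain ⟨W, hW⟩ := (isCompact_closedBall (0 : ℂ) R).exists_bound_of_continuousOn
      hw.continuous.continuousOn
    obtain ⟨C, hC0, hC⟩ := binC_taylor |ε| (abs_nonneg _) n W
    refine ⟨C * |ε| ^ n, by positivity, ?_⟩
    intro k s hs
    have := hC (w s) (hW s (by simpa using hs)) _ (hy k).1 (hy k).2
    have e : ∀ i : ℕ, binC i (w s) * (ε : ℂ) ^ i * ((k : ℂ) + 1) ^ ((-(θ * i) : ℝ) : ℂ) =
        binC i (w s) * ((ε * ((k : ℝ) + 1) ^ (-θ) : ℝ) : ℂ) ^ i := by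
      intro i
      rw [← kofReal, mul_assoc]
      congr 1
      rw [show -(θ * (i : ℝ)) = (-θ) * i by ring, Real.rpow_mul (kpos k).le, Real.rpow_natCast]
      push_cast
      ring
    simp only [e]
    refine this.trans (le_of_eq ?_)
    rw [abs_mul, abs_of_pos (hu k).1, mul_pow, ← Real.rpow_natCast (((k : ℝ) + 1) ^ (-θ)) n,
      ← Real.rpow_mul (kpos k).le]
    ring_nf

lemma exp_shift {θ : ℝ} {X x : ℕ → ℂ → ℂ} (h : HasExp θ X x) :
    HasExp θ (fun k s => (X k s - x 0 s) * ((k : ℂ) + 1) ^ (θ : ℂ)) (fun i => x (i + 1)) := by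
  obtain ⟨h1, h2, h3⟩ := h
  refine ⟨fun k => ((h1 k).sub (h2 0)).mul_const _, fun i => h2 _, ?_⟩
  intro R n
  obtain ⟨C, hC0, hC⟩ := h3 R (n + 1)
  refine ⟨C, hC0, ?_⟩
  intro k s hs
  have := hC k s hs
  rw [Finset.sum_range_succ'] at this
  have e : (X k s - x 0 s) * ((k : ℂ) + 1) ^ (θ : ℂ) -
      ∑ i ∈ Finset.range n, x (i + 1) s * ((k : ℂ) + 1) ^ ((-(θ * i) : ℝ) : ℂ) =
      (X k s - (∑ i ∈ Finset.range n, x (i + 1) s * ((k : ℂ) + 1) ^ ((-(θ * (i + 1 : ℕ)) : ℝ) : ℂ) +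
        x 0 s * ((k : ℂ) + 1) ^ ((-(θ * (0 : ℕ)) : ℝ) : ℂ))) * ((k : ℂ) + 1) ^ (θ : ℂ) := by
    rw [sub_mul, sub_mul, add_mul, Finset.sum_mul]
    have : ∀ i : ℕ, x (i + 1) s * ((k : ℂ) + 1) ^ ((-(θ * (i + 1 : ℕ)) : ℝ) : ℂ) *
        ((k : ℂ) + 1) ^ (θ : ℂ) = x (i + 1) s * ((k : ℂ) + 1) ^ ((-(θ * i) : ℝ) : ℂ) := by
      intro i
      rw [mul_assoc, ← Complex.cpow_add _ _ (kne k)]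
      congr 2
      push_cast
      ring
    simp only [this]
    simp
    ring
  rw [e, norm_mul, knorm, Complex.ofReal_re]
  calc _ ≤ C * ((k : ℝ) + 1) ^ (-(θ * (n + 1 : ℕ))) * ((k : ℝ) + 1) ^ θ := by gcongr
    _ = _ := by
      rw [mul_assoc, ← Real.rpow_add (kpos k)]
      congr 2
      push_cast
      ring

lemma sum_k2 : Summable (fun k : ℕ => ((k : ℝ) + 1) ^ (-2 : ℝ)) := by
  have := (summable_nat_add_iff 1).2 (Real.summable_nat_rpow.2 (show (-2 : ℝ) < -1 by norm_num))
  simpa using this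

lemma hasSum_zeta (z : ℂ) (hz : 1 < z.re) :
    HasSum (fun k : ℕ => ((k : ℂ) + 1) ^ (-z)) (riemannZeta z) := by
  have hs : Summable (fun k : ℕ => ((k : ℂ) + 1) ^ (-z)) := by
    have := (summable_nat_add_iff 1).2 (Complex.summable_one_div_nat_cpow.2 hz)
    refine this.congr fun k => ?_
    push_cast
    rw [Complex.cpow_neg, one_div]
  have := hs.hasSum
  convert! this using 1
  rw [zeta_eq_tsum_one_div_nat_add_one_cpow hz]
  congr 1
  ext k
  rw [Complex.cpow_neg, one_div]

lemma exp_cont {θ₁ θ₂ : ℝ} {X x Y y : ℕ → ℂ → ℂ} (hθ₁ : 0 < θ₁) (hθ₂ : 0 < θ₂)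
    (hX : HasExp θ₁ X x) (hY : HasExp θ₂ Y y) (α β : ℝ) (R : ℝ) (hR : 0 < R) :
    ∃ M : ℂ → ℂ, MeromorphicOn M (Metric.ball 0 R) ∧
      ∀ s ∈ Metric.ball (0 : ℂ) R, 1 < α * s.re + β → DifferentiableAt ℂ M s ∧
        HasSum (fun k : ℕ => ((k : ℂ) + 1) ^ (-((α : ℂ) * s + β)) * (X k s * Y k s)) (M s) := by
  obtain ⟨hX1, hX2, hX3⟩ := hX
  obtain ⟨hY1, hY2, hY3⟩ := hY
  set A : ℝ := |α| * R + |β| with hA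
  obtain ⟨n, hn⟩ := exists_nat_ge ((A + 2) / min θ₁ θ₂)
  have hmin : 0 < min θ₁ θ₂ := lt_min hθ₁ hθ₂
  rw [div_le_iff₀ hmin] at hn
  have hn1 : A + 2 ≤ θ₁ * n := hn.trans (by rw [mul_comm]; gcongr; exact min_le_left _ _)
  have hn2 : A + 2 ≤ θ₂ * n := hn.trans (by rw [mul_comm]; gcongr; exact min_le_right _ _)
  obtain ⟨C1, hC10, hC1⟩ := hX3 R n
  obtain ⟨C2, hC20, hC2⟩ := hY3 R n
  obtain ⟨D1, hD10, hD1⟩ := hX3 R 0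
  obtain ⟨D2, hD20, hD2⟩ := hY3 R 0
  simp only [Finset.range_zero, Finset.sum_empty, sub_zero, Nat.cast_zero, mul_zero, neg_zero,
    Real.rpow_zero, mul_one] at hD1 hD2
  let Xm : ℕ → ℂ → ℂ := fun k s =>
    ∑ i ∈ Finset.range n, x i s * ((k : ℂ) + 1) ^ ((-(θ₁ * i) : ℝ) : ℂ)
  let Ym : ℕ → ℂ → ℂ := fun k s =>
    ∑ i ∈ Finset.range n, y i s * ((k : ℂ) + 1) ^ ((-(θ₂ * i) : ℝ) : ℂ)
  let r : ℕ → ℂ → ℂ := fun k s =>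
    ((k : ℂ) + 1) ^ (-((α : ℂ) * s + β)) * (X k s * Y k s - Xm k s * Ym k s)
  set C : ℝ := C1 * D2 + (D1 + C1) * C2 with hC
  have hpow : ∀ (k : ℕ) (θ : ℝ), A + 2 ≤ θ * n →
      ((k : ℝ) + 1) ^ (-(θ * n)) ≤ ((k : ℝ) + 1) ^ (-(A + 2)) := fun k θ h =>
    Real.rpow_le_rpow_of_exponent_le (kone k) (by linarith)
  have hA0 : 0 ≤ A := by positivity
  have hr : ∀ (k : ℕ) (s : ℂ), s ∈ Metric.ball (0 : ℂ) R → ‖r k s‖ ≤ C * ((k : ℝ) + 1) ^ (-2 : ℝ) := by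
    intro k s hs
    have hsR : ‖s‖ ≤ R := (mem_ball_zero_iff.1 hs).le
    have b1 : ‖X k s - Xm k s‖ ≤ C1 * ((k : ℝ) + 1) ^ (-(A + 2)) :=
      (hC1 k s hsR).trans (mul_le_mul_of_nonneg_left (hpow k θ₁ hn1) hC10)
    have b2 : ‖Y k s - Ym k s‖ ≤ C2 * ((k : ℝ) + 1) ^ (-(A + 2)) :=
      (hC2 k s hsR).trans (mul_le_mul_of_nonneg_left (hpow k θ₂ hn2) hC20)
    have b3 : ‖Y k s‖ ≤ D2 := hD2 k s hsR
    have b4 : ‖Xm k s‖ ≤ D1 + C1 := by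
      have : Xm k s = X k s - (X k s - Xm k s) := by ring
      rw [this]
      refine (norm_sub_le _ _).trans (add_le_add (hD1 k s hsR) (b1.trans ?_))
      have : ((k : ℝ) + 1) ^ (-(A + 2)) ≤ 1 :=
        Real.rpow_le_one_of_one_le_of_nonpos (kone k) (by linarith)
      nlinarith
    have b5 : ‖((k : ℂ) + 1) ^ (-((α : ℂ) * s + β))‖ ≤ ((k : ℝ) + 1) ^ A := by
      rw [knorm]
      apply Real.rpow_le_rpow_of_exponent_le (kone k)
      simp only [Complex.neg_re, Complex.add_re, Complex.mul_re, Complex.ofReal_re,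
        Complex.ofReal_im, zero_mul, sub_zero]
      have h1 : |α * s.re| ≤ |α| * R := by
        rw [abs_mul]; gcongr; exact (Complex.abs_re_le_norm s).trans hsR
      have := neg_abs_le (α * s.re)
      have := neg_abs_le β
      rw [hA]; linarith
    have e : X k s * Y k s - Xm k s * Ym k s =
      (X k s - Xm k s) * Y k s + Xm k s * (Y k s - Ym k s) := by ring
    simp only [r]
    rw [norm_mul, e]
    have hP : 0 ≤ ((k : ℝ) + 1) ^ (-(A + 2)) := (Real.rpow_pos_of_pos (kpos k) _).le
    calc _ ≤ ((k : ℝ) + 1) ^ A * (C1 * ((k : ℝ) + 1) ^ (-(A + 2)) * D2 +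
          (D1 + C1) * (C2 * ((k : ℝ) + 1) ^ (-(A + 2)))) := by
          gcongr
          refine (norm_add_le _ _).trans ?_
          rw [norm_mul, norm_mul]
          gcongr
      _ = C * (((k : ℝ) + 1) ^ A * ((k : ℝ) + 1) ^ (-(A + 2))) := by rw [hC]; ring
      _ = C * ((k : ℝ) + 1) ^ (-2 : ℝ) := by
        rw [← Real.rpow_add (kpos k)]; congr 2; ring
  have hkd : ∀ k : ℕ, Differentiable ℂ (fun s : ℂ => ((k : ℂ) + 1) ^ (-((α : ℂ) * s + β))) := by
    intro k s
    apply DifferentiableAt.const_cpow (by fun_prop) (Or.inl (kne k))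
  have hrd : ∀ k, DifferentiableOn ℂ (r k) (Metric.ball 0 R) := by
    intro k
    apply Differentiable.differentiableOn
    apply (hkd k).mul
    apply ((hX1 k).mul (hY1 k)).sub
    apply Differentiable.mul
    · exact Differentiable.fun_sum fun i _ => (hX2 i).mul_const _
    · exact Differentiable.fun_sum fun i _ => (hY2 i).mul_const _
  have hsum : Summable (fun k : ℕ => C * ((k : ℝ) + 1) ^ (-2 : ℝ)) := sum_k2.mul_left C
  have hrsum := Complex.differentiableOn_tsum_of_summable_norm hsum hrd Metric.isOpen_ball hr
  let M : ℂ → ℂ := fun s => (∑ i ∈ Finset.range n, ∑ j ∈ Finset.range n,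
    (x i s * y j s) * riemannZeta ((α : ℂ) * s + ((β + θ₁ * i + θ₂ * j : ℝ) : ℂ))) + ∑' k, r k s
  refine ⟨M, ?_, ?_⟩
  · intro s hs
    apply MeromorphicAt.fun_add
    · apply MeromorphicAt.fun_sum
      intro i _
      apply MeromorphicAt.fun_sum
      intro j _
      apply MeromorphicAt.fun_mul
      · exact (((hX2 i).mul (hY2 j)).analyticAt s).meromorphicAt
      · exact aux_zeta_affine_mero _ _ s
    · exact (hrsum.analyticAt (Metric.isOpen_ball.mem_nhds hs)).meromorphicAt
  · intro s hs hs1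
    have hre : ∀ i j : ℕ, 1 < ((α : ℂ) * s + ((β + θ₁ * i + θ₂ * j : ℝ) : ℂ)).re := by
      intro i j
      simp only [Complex.add_re, Complex.mul_re, Complex.ofReal_re,
        Complex.ofReal_im, zero_mul, sub_zero]
      have : 0 ≤ θ₁ * i := by positivity
      have : 0 ≤ θ₂ * j := by positivity
      linarith
    constructor
    · apply DifferentiableAt.fun_add
      · apply DifferentiableAt.fun_sum
        intro i _
        apply DifferentiableAt.fun_sum
        intro j _
        apply DifferentiableAt.fun_mul
        · exact ((hX2 i).mul (hY2 j)) s
        · have h1 : DifferentiableAt ℂ (fun s : ℂ => (α : ℂ) * s + ((β + θ₁ * i + θ₂ * j : ℝ) : ℂ)) s := by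
            fun_prop
          refine DifferentiableAt.comp s (differentiableAt_riemannZeta ?_) h1
          intro h
          have := hre i j
          rw [h] at this
          simp at this
      · exact hrsum.differentiableAt (Metric.isOpen_ball.mem_nhds hs)
    · have hr1 : HasSum (fun k => r k s) (∑' k, r k s) :=
        (Summable.of_norm_bounded hsum (fun k => hr k s hs)).hasSum
      have hm : HasSum (fun k : ℕ => ∑ i ∈ Finset.range n, ∑ j ∈ Finset.range n,
          (x i s * y j s) * ((k : ℂ) + 1) ^ (-((α : ℂ) * s + ((β + θ₁ * i + θ₂ * j : ℝ) : ℂ))))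
          (∑ i ∈ Finset.range n, ∑ j ∈ Finset.range n,
    (x i s * y j s) * riemannZeta ((α : ℂ) * s + ((β + θ₁ * i + θ₂ * j : ℝ) : ℂ))) := by
        apply hasSum_sum
        intro i _
        apply hasSum_sum
        intro j _
        exact (hasSum_zeta _ (hre i j)).mul_left _
      have := hm.add hr1
      convert! this using 1
      ext k
      have e : ((k : ℂ) + 1) ^ (-((α : ℂ) * s + β)) * (Xm k s * Ym k s) =
        ∑ i ∈ Finset.range n, ∑ j ∈ Finset.range n,
          (x i s * y j s) * ((k : ℂ) + 1) ^ (-((α : ℂ) * s + ((β + θ₁ * i + θ₂ * j : ℝ) : ℂ))) := by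
        simp only [Xm, Ym]
        rw [Finset.sum_mul_sum, Finset.mul_sum]
        apply Finset.sum_congr rfl
        intro i _
        rw [Finset.mul_sum]
        apply Finset.sum_congr rfl
        intro j _
        have : -((α : ℂ) * s + ((β + θ₁ * i + θ₂ * j : ℝ) : ℂ)) =
          -((α : ℂ) * s + β) + ((-(θ₁ * i) : ℝ) : ℂ) + ((-(θ₂ * j) : ℝ) : ℂ) := by
          push_cast; ring
        rw [this, Complex.cpow_add _ _ (kne k), Complex.cpow_add _ _ (kne k)]
        ring
      rw [← e]
      simp only [r]
      ring

/-- truncated Mellin-type integral -/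
noncomputable def mI (V B : ℝ) (z : ℂ) : ℂ :=
  ∫ v in Set.Ioc 0 V, (v : ℂ) ^ (z - 1) / ((v + B : ℝ) : ℂ)

lemma cpow_meas (z : ℂ) (S : Set ℝ) (hS : MeasurableSet S) (hS0 : S ⊆ Set.Ioi 0) :
    ContinuousOn (fun v : ℝ => (v : ℂ) ^ z) S := by
  intro v hv
  apply ContinuousAt.continuousWithinAt
  exact Complex.continuous_ofReal.continuousAt.cpow continuousAt_const
    (Or.inl (by simpa using hS0 hv))

lemma div_int (z : ℂ) (B : ℝ) (hB : 0 < B) (S : Set ℝ) (hS : MeasurableSet S) (hS0 : S ⊆ Set.Ioi 0)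
    (h : IntegrableOn (fun v : ℝ => (v : ℂ) ^ z) S) :
    IntegrableOn (fun v : ℝ => (v : ℂ) ^ z / ((v + B : ℝ) : ℂ)) S := by
  refine Integrable.mono' (h.norm.mul_const B⁻¹) ?_ ?_
  · apply ContinuousOn.aestronglyMeasurable _ hS
    apply (cpow_meas z S hS hS0).div
    · exact (Complex.continuous_ofReal.comp (continuous_id.add continuous_const)).continuousOn
    · intro v hv
      have : 0 < v := hS0 hv
      exact_mod_cast (by positivity : v + B ≠ 0)
  · filter_upwards [ae_restrict_mem hS] with v hv
    have hv0 : 0 < v := hS0 hv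
    rw [norm_div, Complex.norm_real, Real.norm_eq_abs, abs_of_pos (by positivity), div_eq_mul_inv]
    gcongr
    linarith

lemma cpow_int_Ioc (z : ℂ) (V : ℝ) (hV : 0 < V) (hz : -1 < z.re) :
    IntegrableOn (fun v : ℝ => (v : ℂ) ^ z) (Set.Ioc 0 V) := by
  have := intervalIntegral.intervalIntegrable_cpow' (a := 0) (b := V) hz
  rwa [intervalIntegrable_iff_integrableOn_Ioc_of_le hV.le] at this

lemma mI_int (V B : ℝ) (hV : 0 < V) (hB : 0 < B) (z : ℂ) (hz : -1 < z.re) :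
    IntegrableOn (fun v : ℝ => (v : ℂ) ^ z / ((v + B : ℝ) : ℂ)) (Set.Ioc 0 V) :=
  div_int z B hB _ measurableSet_Ioc (fun _ hv => hv.1) (cpow_int_Ioc z V hV hz)

lemma mI_diff (V B : ℝ) (hV : 0 < V) (hB : 0 < B) (z : ℂ) (hz : 0 < z.re) :
    DifferentiableAt ℂ (mI V B) z := by
  let f : ℝ → ℂ := Set.indicator (Set.Ioc 0 V) (fun v : ℝ => 1 / ((v + B : ℝ) : ℂ))
  have e : mI V B = mellin f := by
    ext w
    rw [mI, mellin]
    have : ∀ t : ℝ, (t : ℂ) ^ (w - 1) • f t =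
        Set.indicator (Set.Ioc 0 V) (fun v : ℝ => (v : ℂ) ^ (w - 1) / ((v + B : ℝ) : ℂ)) t := by
      intro t
      simp only [f, smul_eq_mul, Set.indicator]
      split_ifs
      · rw [mul_one_div]
      · simp
    simp only [this]
    rw [setIntegral_indicator measurableSet_Ioc]
    congr 2
    ext x; simp
  have hInt0 : IntegrableOn (fun v : ℝ => 1 / ((v + B : ℝ) : ℂ)) (Set.Ioc 0 V) := by
    have := mI_int V B hV hB 0 (by simp)
    simpa using this
  rw [e]
  apply mellin_differentiableAt_of_isBigO_rpow (a := z.re + 1) (b := 0)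
  · apply IntegrableOn.locallyIntegrableOn
    apply Integrable.integrableOn
    rw [integrable_indicator_iff measurableSet_Ioc]
    exact hInt0
  · apply Asymptotics.IsBigO.of_bound 1
    filter_upwards [eventually_gt_atTop V] with v hv
    have : f v = 0 := Set.indicator_of_notMem (fun h => absurd h.2 (not_le.2 hv)) _
    rw [this, norm_zero]
    positivity
  · linarith
  · apply Asymptotics.IsBigO.of_bound B⁻¹
    filter_upwards [self_mem_nhdsWithin] with v hv
    have hv0 : 0 < v := hv
    simp only [neg_zero, Real.rpow_zero, norm_one, mul_one, f]
    refine (norm_indicator_le_norm_self _ _).trans ?_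
    rw [norm_div, norm_one, Complex.norm_real, Real.norm_eq_abs, abs_of_pos (by positivity), one_div]
    gcongr
    linarith
  · exact hz

lemma split_pt (z : ℂ) (B v : ℝ) (hB : 0 < B) (hv : 0 < v) :
    (v : ℂ) ^ z / ((v + B : ℝ) : ℂ) =
      (v : ℂ) ^ z * (B : ℂ)⁻¹ - (B : ℂ)⁻¹ * ((v : ℂ) ^ (z + 1) / ((v + B : ℝ) : ℂ)) := by
  have hv' : (v : ℂ) ≠ 0 := by exact_mod_cast hv.ne'
  have hB' : (B : ℂ) ≠ 0 := by exact_mod_cast hB.ne'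
  have hvB : (v : ℂ) + B ≠ 0 := by exact_mod_cast (by positivity : v + B ≠ 0)
  rw [Complex.cpow_add _ _ hv', Complex.cpow_one]
  push_cast
  field_simp
  ring

lemma mI_rec (V B : ℝ) (hV : 0 < V) (hB : 0 < B) (z : ℂ) (hz : 0 < z.re) :
    mI V B z = (V : ℂ) ^ z / (z * B) - (B : ℂ)⁻¹ * mI V B (z + 1) := by
  have h1 : mI V B z = ∫ v in Set.Ioc 0 V, ((v : ℂ) ^ (z - 1) * (B : ℂ)⁻¹ -
      (B : ℂ)⁻¹ * ((v : ℂ) ^ (z - 1 + 1) / ((v + B : ℝ) : ℂ))) :=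
    setIntegral_congr_fun measurableSet_Ioc fun v hv => split_pt _ B v hB hv.1
  rw [h1, integral_sub, integral_mul_const, integral_const_mul, mI]
  · congr 1
    · rw [← intervalIntegral.integral_of_le hV.le, integral_cpow (Or.inl (by simpa using hz))]
      have hz0 : z ≠ 0 := by rintro rfl; simp at hz
      simp only [sub_add_cancel]
      rw [Complex.ofReal_zero, Complex.zero_cpow hz0]
      have hB' : (B : ℂ) ≠ 0 := by exact_mod_cast hB.ne'
      field_simp
      simp
    · congr 3
      ext v
      congr 2
      ring
  · exact (cpow_int_Ioc _ V hV (by simpa using hz)).mul_const _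
  · exact (mI_int V B hV hB _ (by simp; linarith)).const_mul _

lemma mI_bound (V B : ℝ) (hV : 0 < V) (hB : 0 < B) (z : ℂ) (hz : 1 ≤ z.re) :
    ‖mI V B z‖ ≤ V ^ z.re * B⁻¹ := by
  have : ‖mI V B z‖ ≤ (V ^ (z.re - 1) * B⁻¹) * volume.real (Set.Ioc 0 V) := by
    apply norm_setIntegral_le_of_norm_le_const
    · simp
    · intro v hv
      have hv0 : 0 < v := hv.1
      rw [norm_div, Complex.norm_cpow_eq_rpow_re_of_pos hv0, Complex.norm_real, Real.norm_eq_abs,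
        abs_of_pos (by positivity), div_eq_mul_inv]
      have h1 : v ^ (z - 1).re ≤ V ^ (z.re - 1) := by
        simp only [Complex.sub_re, Complex.one_re]
        exact Real.rpow_le_rpow hv0.le hv.2 (by linarith)
      gcongr
      linarith
  refine this.trans (le_of_eq ?_)
  rw [Real.volume_real_Ioc_of_le hV.le, sub_zero, Real.rpow_sub_one hV.ne']
  field_simp

lemma beta_formula (B : ℝ) (hB : 0 < B) (z : ℂ) (hz0 : 0 < z.re) (hz1 : z.re < 1) :
    ∫ v in Set.Ioi (0 : ℝ), (v : ℂ) ^ (z - 1) / ((v + B : ℝ) : ℂ) =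
      (Real.pi : ℂ) / Complex.sin (Real.pi * z) * (B : ℂ) ^ (z - 1) := by
  have hB' : (B : ℂ) ≠ 0 := by exact_mod_cast hB.ne'
  have hG := Complex.Gamma_mul_Gamma_eq_betaIntegral (s := z) (t := 1 - z) hz0 (by simpa using hz1)
  rw [add_sub_cancel, Complex.Gamma_one, one_mul, Complex.Gamma_mul_Gamma_one_sub] at hG
  let f : ℝ → ℝ := fun v => v / (v + B)
  let f' : ℝ → ℝ := fun v => B / (v + B) ^ 2
  have hder : ∀ v ∈ Set.Ioi (0 : ℝ), HasDerivWithinAt f (f' v) (Set.Ioi 0) v := by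
    intro v hv
    have hv0 : 0 < v := hv
    apply HasDerivAt.hasDerivWithinAt
    have := (hasDerivAt_id v).div ((hasDerivAt_id v).add_const B) (by simp; positivity)
    convert! this using 1
    simp [f']
  have himg : f '' Set.Ioi 0 = Set.Ioo 0 1 := by
    ext x
    constructor
    · rintro ⟨v, hv, rfl⟩
      have hv0 : 0 < v := hv
      simp only [f]
      refine ⟨by positivity, ?_⟩
      rw [div_lt_one (by positivity)]
      linarith
    · rintro ⟨h0, h1⟩
      refine ⟨B * x / (1 - x), ?_, ?_⟩
      · have : 0 < 1 - x := by linarith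
        exact div_pos (by positivity) this
      · have : 1 - x ≠ 0 := by linarith
        simp only [f]
        field_simp
        simp
  have hinj : Set.InjOn f (Set.Ioi 0) := by
    intro a ha b hb hab
    have ha0 : 0 < a := ha
    have hb0 : 0 < b := hb
    simp only [f] at hab
    rw [div_eq_div_iff (by positivity) (by positivity)] at hab
    have : B * (a - b) = 0 := by linarith
    rcases mul_eq_zero.1 this with h | h
    · exact absurd h hB.ne'
    · linarith
  have hcv := integral_image_eq_integral_abs_deriv_smul measurableSet_Ioi hder hinj
    (fun x : ℝ => (x : ℂ) ^ (z - 1) * (1 - (x : ℂ)) ^ (1 - z - 1))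
  rw [himg] at hcv
  have hbeta : Complex.betaIntegral z (1 - z) =
      ∫ x in Set.Ioo (0 : ℝ) 1, (x : ℂ) ^ (z - 1) * (1 - (x : ℂ)) ^ (1 - z - 1) := by
    rw [Complex.betaIntegral, intervalIntegral.integral_of_le zero_le_one, integral_Ioc_eq_integral_Ioo]
  have hpt : ∀ v ∈ Set.Ioi (0 : ℝ),
      |f' v| • (((f v : ℝ) : ℂ) ^ (z - 1) * (1 - ((f v : ℝ) : ℂ)) ^ (1 - z - 1)) =
      (B : ℂ) ^ (1 - z) * ((v : ℂ) ^ (z - 1) / ((v + B : ℝ) : ℂ)) := by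
    intro v hv
    have hv0 : 0 < v := hv
    have hvB : 0 < v + B := by positivity
    have hvB' : ((v + B : ℝ) : ℂ) ≠ 0 := by exact_mod_cast hvB.ne'
    have e1 : (1 : ℂ) - ((f v : ℝ) : ℂ) = ((B / (v + B) : ℝ) : ℂ) := by
      rw [← Complex.ofReal_one, ← Complex.ofReal_sub]
      congr 1
      simp only [f]
      field_simp
      ring
    have hf' : |f' v| = B / (v + B) ^ 2 := abs_of_pos (by simp only [f']; positivity)
    have ed : ∀ (a : ℝ) (w : ℂ), 0 < a → ((a / (v + B) : ℝ) : ℂ) ^ w =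
        (a : ℂ) ^ w * ((v + B : ℝ) : ℂ) ^ (-w) := by
      intro a w ha
      rw [div_eq_mul_inv, Complex.ofReal_mul, Complex.mul_cpow_ofReal_nonneg ha.le (by positivity),
        Complex.cpow_neg]
      congr 1
      rw [Complex.ofReal_inv, Complex.inv_cpow]
      rw [Complex.arg_ofReal_of_nonneg hvB.le]
      exact Real.pi_pos.ne
    rw [e1, hf', ed B _ hB]
    simp only [f]
    rw [ed v _ hv0, Complex.real_smul, Complex.ofReal_div, Complex.ofReal_pow]
    have e2 : (B : ℂ) ^ (1 - z) = B * (B : ℂ) ^ (1 - z - 1) := by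
      rw [Complex.cpow_sub _ 1 hB', Complex.cpow_one]
      field_simp
    have e3 : ((v + B : ℝ) : ℂ) ^ (-(z - 1)) * ((v + B : ℝ) : ℂ) ^ (-(1 - z - 1)) = ((v + B : ℝ) : ℂ) := by
      rw [← Complex.cpow_add _ _ hvB']
      ring_nf
      rw [Complex.cpow_one]
    rw [e2]
    calc _ = (B : ℂ) / ((v + B : ℝ) : ℂ) ^ 2 * (v : ℂ) ^ (z - 1) * (B : ℂ) ^ (1 - z - 1) *
        (((v + B : ℝ) : ℂ) ^ (-(z - 1)) * ((v + B : ℝ) : ℂ) ^ (-(1 - z - 1))) := by ring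
      _ = _ := by
        rw [e3]
        field_simp
  rw [setIntegral_congr_fun measurableSet_Ioi hpt, integral_const_mul, ← hbeta, ← hG] at hcv
  have hBB : (B : ℂ) ^ (z - 1) * (B : ℂ) ^ (1 - z) = 1 := by
    rw [← Complex.cpow_add _ _ hB']
    ring_nf
    exact Complex.cpow_zero _
  rw [hcv, mul_comm, ← mul_assoc, hBB, one_mul]

lemma tail_formula (V B : ℝ) (hV : 0 < V) (hB : 0 < B) (s : ℂ) (hs1 : 1 < s.re) (hs2 : s.re < 2) :
    ∫ v in Set.Ioi V, (v : ℂ) ^ (-s) / ((v + B : ℝ) : ℂ) =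
      (V : ℂ) ^ (1 - s) / (B * (s - 1)) + (Real.pi : ℂ) / Complex.sin (Real.pi * s) * (B : ℂ) ^ (-s)
        + (B : ℂ)⁻¹ * mI V B (2 - s) := by
  have hB' : (B : ℂ) ≠ 0 := by exact_mod_cast hB.ne'
  have hsub : Set.Ioi V ⊆ Set.Ioi (0 : ℝ) := Set.Ioi_subset_Ioi hV.le
  have i1 : IntegrableOn (fun v : ℝ => (v : ℂ) ^ (-s)) (Set.Ioi V) :=
    integrableOn_Ioi_cpow_of_lt (by simpa using hs1) hV
  have i2 : IntegrableOn (fun v : ℝ => (v : ℂ) ^ (-s) / ((v + B : ℝ) : ℂ)) (Set.Ioi V) :=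
    div_int _ B hB _ measurableSet_Ioi hsub i1
  have i3 : IntegrableOn (fun v : ℝ => (v : ℂ) ^ (-s + 1) / ((v + B : ℝ) : ℂ)) (Set.Ioi V) := by
    have : IntegrableOn (fun v : ℝ => (B : ℂ) * ((v : ℂ) ^ (-s) * (B : ℂ)⁻¹ -
        (v : ℂ) ^ (-s) / ((v + B : ℝ) : ℂ))) (Set.Ioi V) :=
      ((i1.mul_const _).sub i2).const_mul _
    refine this.congr_fun ?_ measurableSet_Ioi
    intro v hv
    simp only
    rw [split_pt (-s) B v hB (hsub hv)]
    field_simp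
    ring
  have i4 : IntegrableOn (fun v : ℝ => (v : ℂ) ^ (-s + 1) / ((v + B : ℝ) : ℂ)) (Set.Ioc 0 V) :=
    mI_int V B hV hB _ (by simp; linarith)
  have h1 : ∫ v in Set.Ioi V, (v : ℂ) ^ (-s) / ((v + B : ℝ) : ℂ) =
      ∫ v in Set.Ioi V, ((v : ℂ) ^ (-s) * (B : ℂ)⁻¹ -
      (B : ℂ)⁻¹ * ((v : ℂ) ^ (-s + 1) / ((v + B : ℝ) : ℂ))) :=
    setIntegral_congr_fun measurableSet_Ioi fun v hv => split_pt _ B v hB (hsub hv)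
  have h2 := beta_formula B hB (2 - s) (by simp; linarith) (by simp; linarith)
  have e21 : (2 : ℂ) - s - 1 = -s + 1 := by ring
  rw [e21, ← Set.Ioc_union_Ioi_eq_Ioi hV.le, setIntegral_union (Set.Ioc_disjoint_Ioi le_rfl)
    measurableSet_Ioi i4 i3] at h2
  have h3 : mI V B (2 - s) = ∫ v in Set.Ioc 0 V, (v : ℂ) ^ (-s + 1) / ((v + B : ℝ) : ℂ) := by
    rw [mI, e21]
  have hsin : Complex.sin (Real.pi * (2 - s)) = - Complex.sin (Real.pi * s) := by
    rw [show (Real.pi : ℂ) * (2 - s) = 2 * Real.pi - Real.pi * s by ring, Complex.sin_two_pi_sub]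
  rw [h1, integral_sub (i1.mul_const _) (i3.const_mul _), integral_mul_const, integral_const_mul,
    eq_sub_of_add_eq' h2, ← h3, integral_Ioi_cpow_of_lt (by simpa using hs1) hV, hsin,
    Complex.cpow_add _ _ hB', Complex.cpow_one]
  have hs : s - 1 ≠ 0 := by
    intro h
    have := congrArg Complex.re h
    simp at this; linarith
  have hs' : -s + 1 ≠ 0 := by
    intro h; apply hs; linear_combination -h
  have e : (1 : ℂ) - s = -s + 1 := by ring
  rw [e]
  have e5 : (V : ℂ) ^ (-s + 1) / (B * (s - 1)) = -(V : ℂ) ^ (-s + 1) / (-s + 1) * (B : ℂ)⁻¹ := by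
    have : s - 1 = -(-s + 1) := by ring
    rw [this]
    field_simp
  rw [e5]
  field_simp
  ring

lemma tail_bound (V B : ℝ) (hV : 0 < V) (hB : 0 < B) (s : ℂ) (hs1 : 1 < s.re) :
    ‖∫ v in Set.Ioi V, (v : ℂ) ^ (-s) / ((v + B : ℝ) : ℂ)‖ ≤ V ^ (1 - s.re) / (s.re - 1) * B⁻¹ := by
  have i1 : IntegrableOn (fun v : ℝ => v ^ (-s.re)) (Set.Ioi V) :=
    integrableOn_Ioi_rpow_of_lt (by linarith) hV
  have : ‖∫ v in Set.Ioi V, (v : ℂ) ^ (-s) / ((v + B : ℝ) : ℂ)‖ ≤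
      ∫ v in Set.Ioi V, v ^ (-s.re) * B⁻¹ := by
    apply norm_integral_le_of_norm_le (i1.mul_const _)
    filter_upwards [ae_restrict_mem measurableSet_Ioi] with v hv
    have hv0 : 0 < v := hV.trans hv
    rw [norm_div, Complex.norm_cpow_eq_rpow_re_of_pos hv0, Complex.norm_real, Real.norm_eq_abs,
        abs_of_pos (by positivity), div_eq_mul_inv, Complex.neg_re]
    gcongr
    linarith
  refine this.trans (le_of_eq ?_)
  rw [integral_mul_const, integral_Ioi_rpow_of_lt (by linarith) hV]
  congr 1
  rw [show -s.re + 1 = -(s.re - 1) by ring, div_neg, neg_div, neg_neg, neg_sub]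

/-- lower limit after substitution -/
noncomputable def Vk (δ : ℝ) (k : ℕ) : ℝ := ((k : ℝ) + 1) ^ (2 * δ) - 1 / 4

/-- shift after substitution -/
noncomputable def Bk (b : ℝ) (k : ℕ) : ℝ := b * ((k : ℝ) + 1) ^ 2 + 1 / 4

lemma Vk_ge (δ : ℝ) (hδ : 0 < δ) (k : ℕ) : 3 / 4 ≤ Vk δ k := by
  have := Real.one_le_rpow (kone k) (show 0 ≤ 2 * δ by linarith)
  unfold Vk; linarith

lemma Vk_le (δ : ℝ) (k : ℕ) : Vk δ k ≤ ((k : ℝ) + 1) ^ (2 * δ) := by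
  unfold Vk; linarith

lemma Bk_pos (b : ℝ) (hb : 0 < b) (k : ℕ) : 0 < Bk b k := by
  unfold Bk; have := kpos k; positivity

lemma Bk_inv_le (b : ℝ) (hb : 0 < b) (k : ℕ) : (Bk b k)⁻¹ ≤ b⁻¹ * ((k : ℝ) + 1) ^ (-2 : ℝ) := by
  have hk := kpos k
  rw [Real.rpow_neg hk.le, show ((k : ℝ) + 1) ^ (2 : ℝ) = ((k : ℝ) + 1) ^ 2 by
    rw [← Real.rpow_natCast]; norm_num, ← mul_inv]
  apply inv_anti₀ (by positivity)
  unfold Bk; linarith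

lemma kpow_cpow (k : ℕ) (a : ℝ) (w : ℂ) :
    ((((k : ℝ) + 1) ^ a : ℝ) : ℂ) ^ w = ((k : ℂ) + 1) ^ ((a : ℂ) * w) := by
  have hk := kpos k
  have h1 : ((((k : ℝ) + 1) ^ a : ℝ) : ℂ) ≠ 0 := by
    exact_mod_cast (Real.rpow_pos_of_pos hk a).ne'
  rw [Complex.cpow_def_of_ne_zero h1, Complex.cpow_def_of_ne_zero (kne k),
    ← Complex.ofReal_log (Real.rpow_pos_of_pos hk a).le, Real.log_rpow hk]
  rw [show ((k : ℂ) + 1) = (((k : ℝ) + 1 : ℝ) : ℂ) by push_cast; rfl, ← Complex.ofReal_log hk.le]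
  push_cast
  ring_nf

lemma Vk_cpow (δ : ℝ) (hδ : 0 < δ) (k : ℕ) (w : ℂ) :
    ((Vk δ k : ℝ) : ℂ) ^ w = ((k : ℂ) + 1) ^ (((2 * δ : ℝ) : ℂ) * w) *
      ((1 + (-(1 / 4)) * ((k : ℝ) + 1) ^ (-(2 * δ)) : ℝ) : ℂ) ^ w := by
  have hk := kpos k
  have e : Vk δ k = ((k : ℝ) + 1) ^ (2 * δ) * (1 + (-(1 / 4)) * ((k : ℝ) + 1) ^ (-(2 * δ))) := by
    rw [mul_add, mul_one, mul_left_comm, ← Real.rpow_add hk]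
    simp [Vk]; ring
  have hp : 0 < ((k : ℝ) + 1) ^ (2 * δ) := Real.rpow_pos_of_pos hk _
  have hV := Vk_ge δ hδ k
  have h2 : 0 ≤ 1 + (-(1 / 4)) * ((k : ℝ) + 1) ^ (-(2 * δ)) := by
    by_contra hneg
    push Not at hneg
    have : Vk δ k < 0 := by rw [e]; exact mul_neg_of_pos_of_neg hp hneg
    linarith
  rw [e, Complex.ofReal_mul, Complex.mul_cpow_ofReal_nonneg hp.le h2, kpow_cpow]

lemma Bk_cpow (b : ℝ) (hb : 0 < b) (k : ℕ) (w : ℂ) :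
    ((Bk b k : ℝ) : ℂ) ^ w = (b : ℂ) ^ w * ((k : ℂ) + 1) ^ (2 * w) *
      ((1 + (1 / (4 * b)) * ((k : ℝ) + 1) ^ (-(2 : ℝ)) : ℝ) : ℂ) ^ w := by
  have hk := kpos k
  have e : Bk b k = b * ((k : ℝ) + 1) ^ (2 : ℝ) *
      (1 + (1 / (4 * b)) * ((k : ℝ) + 1) ^ (-(2 : ℝ))) := by
    rw [mul_add, mul_one, show b * ((k : ℝ) + 1) ^ (2 : ℝ) * (1 / (4 * b) * ((k : ℝ) + 1) ^ (-(2 : ℝ)))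
      = (b * (1 / (4 * b))) * (((k : ℝ) + 1) ^ (2 : ℝ) * ((k : ℝ) + 1) ^ (-(2 : ℝ))) by ring,
      ← Real.rpow_add hk]
    have : ((k : ℝ) + 1) ^ (2 : ℝ) = ((k : ℝ) + 1) ^ 2 := by
      rw [← Real.rpow_natCast]; norm_num
    rw [this]
    simp [Bk]
    field_simp
  have hp : 0 < ((k : ℝ) + 1) ^ (2 : ℝ) := Real.rpow_pos_of_pos hk _
  have hp2 : 0 < ((k : ℝ) + 1) ^ (-(2 : ℝ)) := Real.rpow_pos_of_pos hk _
  rw [e, Complex.ofReal_mul, Complex.mul_cpow_ofReal_nonneg (by positivity) (by positivity),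
    Complex.ofReal_mul, Complex.mul_cpow_ofReal_nonneg (by positivity) (by positivity), kpow_cpow]
  norm_num

lemma cont_P (δ b : ℝ) (hδ : 0 < δ) (hb : 0 < b) (j : ℕ) (R : ℝ) (hR : 0 < R) :
    ∃ M : ℂ → ℂ, MeromorphicOn M (Metric.ball 0 R) ∧
      ∀ s ∈ Metric.ball (0 : ℂ) R, 1 < 2 * δ * s.re + (2 - 2 * δ) * (j + 1) → DifferentiableAt ℂ M s ∧
        HasSum (fun k : ℕ => ((Vk δ k : ℝ) : ℂ) ^ ((j : ℂ) + 1 - s) *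
          ((Bk b k : ℝ) : ℂ) ^ (-((j : ℂ) + 1))) (M s) := by
  have hX := exp_binom (2 * δ) (-(1 / 4)) (by linarith) (by norm_num) (fun s => (j : ℂ) + 1 - s)
    (by fun_prop)
  have hY := exp_binom 2 (1 / (4 * b)) (by norm_num)
    ((show -(1 / 4) ≤ (0 : ℝ) by norm_num).trans (by positivity)) (fun _ => -((j : ℂ) + 1)) (by fun_prop)
  obtain ⟨M, hM1, hM2⟩ := exp_cont (by linarith) (by norm_num) hX hY (2 * δ)
    ((2 - 2 * δ) * (j + 1)) R hR
  refine ⟨fun s => (b : ℂ) ^ (-((j : ℂ) + 1)) * M s, ?_, ?_⟩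
  · intro s hs
    exact (MeromorphicAt.const _ _).fun_mul (hM1 s hs)
  · intro s hs h1
    obtain ⟨h2, h3⟩ := hM2 s hs h1
    refine ⟨h2.const_mul _, ?_⟩
    have := h3.mul_left ((b : ℂ) ^ (-((j : ℂ) + 1)))
    convert! this using 1
    ext k
    rw [Vk_cpow δ hδ, Bk_cpow b hb]
    have e : ((k : ℂ) + 1) ^ (-(((2 * δ : ℝ) : ℂ) * s + (((2 - 2 * δ) * (j + 1) : ℝ) : ℂ))) =
        ((k : ℂ) + 1) ^ (((2 * δ : ℝ) : ℂ) * ((j : ℂ) + 1 - s)) *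
          ((k : ℂ) + 1) ^ (2 * -((j : ℂ) + 1)) := by
      rw [← Complex.cpow_add _ _ (kne k)]
      congr 1
      push_cast
      ring
    rw [e]
    ring

/-- entire coefficient `(-1)^j sin(π s)/(j+1-s)` -/
noncomputable def gC (j : ℕ) (s : ℂ) : ℂ :=
  -(-1) ^ j * dslope (fun s : ℂ => Complex.sin (Real.pi * s)) ((j : ℂ) + 1) s

lemma gC_diff (j : ℕ) : Differentiable ℂ (gC j) := by
  have h : DifferentiableOn ℂ (fun s : ℂ => Complex.sin (Real.pi * s)) Set.univ := by
    apply Differentiable.differentiableOn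
    fun_prop
  have := (Complex.differentiableOn_dslope (c := (j : ℂ) + 1) univ_mem).2 h
  exact (differentiableOn_univ.1 this).const_mul _

lemma gC_mul (j : ℕ) (s : ℂ) (hs : s ≠ (j : ℂ) + 1) :
    gC j s = (-1) ^ j * Complex.sin (Real.pi * s) / ((j : ℂ) + 1 - s) := by
  have h0 : Complex.sin (Real.pi * ((j : ℂ) + 1)) = 0 := by
    rw [mul_comm]
    have := Complex.sin_nat_mul_pi (j + 1)
    push_cast at this
    exact this
  rw [gC, dslope_of_ne _ hs, slope_def_field, h0, sub_zero]
  have h1 : s - ((j : ℂ) + 1) ≠ 0 := sub_ne_zero.2 hs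
  have h2 : (j : ℂ) + 1 - s ≠ 0 := sub_ne_zero.2 hs.symm
  rw [show s - ((j : ℂ) + 1) = -((j : ℂ) + 1 - s) by ring]
  field_simp

/-- continued truncated integral times `sin (π s)` -/
noncomputable def Tk (δ b : ℝ) (J k : ℕ) (s : ℂ) : ℂ :=
  (∑ j ∈ Finset.range J, gC j s * (((Vk δ k : ℝ) : ℂ) ^ ((j : ℂ) + 1 - s) *
          ((Bk b k : ℝ) : ℂ) ^ (-((j : ℂ) + 1)))) +
    (-1) ^ J * Complex.sin (Real.pi * s) * (((Bk b k : ℝ) : ℂ)⁻¹) ^ J * mI (Vk δ k) (Bk b k) ((J : ℂ) + 1 - s)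

lemma Tk_succ (δ b : ℝ) (hδ : 0 < δ) (hb : 0 < b) (J k : ℕ) (s : ℂ) (hs : s.re < J + 1) :
    Tk δ b (J + 1) k s = Tk δ b J k s := by
  have hV : 0 < Vk δ k := by linarith [Vk_ge δ hδ k]
  have hB := Bk_pos b hb k
  have hB' : ((Bk b k : ℝ) : ℂ) ≠ 0 := by exact_mod_cast hB.ne'
  have hne : s ≠ (J : ℂ) + 1 := by
    rintro rfl
    simp at hs
  have hne' : (J : ℂ) + 1 - s ≠ 0 := sub_ne_zero.2 hne.symm
  rw [Tk, Tk, Finset.sum_range_succ, gC_mul J s hne,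
    mI_rec (Vk δ k) (Bk b k) hV hB ((J : ℂ) + 1 - s) (by simp; linarith)]
  have e : (((J + 1 : ℕ) : ℂ) + 1 - s) = (J : ℂ) + 1 - s + 1 := by push_cast; ring
  have e2 : ((Bk b k : ℝ) : ℂ) ^ (-((J : ℂ) + 1)) = (((Bk b k : ℝ) : ℂ)⁻¹) ^ (J + 1) := by
    rw [Complex.cpow_neg, inv_pow]
    congr 1
    have := Complex.cpow_natCast ((Bk b k : ℝ) : ℂ) (J + 1)
    push_cast at this
    exact this
  rw [e, e2]
  generalize (J : ℂ) + 1 - s = z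
  rw [add_assoc]
  congr 1
  ring

lemma Tk_zero (δ b : ℝ) (hδ : 0 < δ) (hb : 0 < b) (J k : ℕ) (s : ℂ) (hs : s.re < 1) :
    Tk δ b J k s = Complex.sin (Real.pi * s) * mI (Vk δ k) (Bk b k) (1 - s) := by
  induction J with
  | zero => simp [Tk]
  | succ J ih =>
    rw [Tk_succ δ b hδ hb J k s, ih]
    have : (0 : ℝ) ≤ J := Nat.cast_nonneg J
    linarith

lemma Tk_one (δ b : ℝ) (hδ : 0 < δ) (hb : 0 < b) (J k : ℕ) (s : ℂ) (hs : s.re < 2) :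
    Tk δ b (J + 1) k s = Tk δ b 1 k s := by
  induction J with
  | zero => rfl
  | succ J ih =>
    rw [Tk_succ δ b hδ hb (J + 1) k s, ih]
    have : (0 : ℝ) ≤ J := Nat.cast_nonneg J
    push_cast
    linarith

lemma cont_T (δ b : ℝ) (hδ : 0 < δ) (hδ1 : δ < 1 / 8) (hb : 0 < b) (R : ℝ) (hR : 0 < R) :
    ∃ (J : ℕ) (M : ℂ → ℂ), MeromorphicOn M (Metric.ball 0 R) ∧
      ∀ s ∈ Metric.ball (0 : ℂ) R, 1 < 2 * δ * s.re + (2 - 2 * δ) → DifferentiableAt ℂ M s ∧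
        HasSum (fun k : ℕ => Tk δ b (J + 1) k s) (M s) := by
  obtain ⟨J, hJ⟩ := exists_nat_ge R
  choose P hP1 hP2 using fun j => cont_P δ b hδ hb j R hR
  let r : ℕ → ℂ → ℂ := fun k s => (-1) ^ (J + 1) * Complex.sin (Real.pi * s) *
    (((Bk b k : ℝ) : ℂ)⁻¹) ^ (J + 1) * mI (Vk δ k) (Bk b k) (((J + 1 : ℕ) : ℂ) + 1 - s)
  have hsind : Differentiable ℂ (fun s : ℂ => Complex.sin (Real.pi * s)) := by fun_prop
  obtain ⟨S, hS⟩ := (isCompact_closedBall (0 : ℂ) R).exists_bound_of_continuousOn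
      hsind.continuous.continuousOn
  have hS0 : 0 ≤ S := (norm_nonneg _).trans (hS 0 (by simp [hR.le]))
  have hVp : ∀ k, 0 < Vk δ k := fun k => by linarith [Vk_ge δ hδ k]
  have hrd : ∀ k, DifferentiableOn ℂ (r k) (Metric.ball 0 R) := by
    intro k s hs
    apply DifferentiableAt.differentiableWithinAt
    apply DifferentiableAt.fun_mul
    · exact ((hsind s).const_mul _).mul_const _
    · have h1 : DifferentiableAt ℂ (fun s : ℂ => ((J + 1 : ℕ) : ℂ) + 1 - s) s := by fun_prop
      refine DifferentiableAt.comp (g := mI (Vk δ k) (Bk b k))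
        (f := fun s : ℂ => ((J + 1 : ℕ) : ℂ) + 1 - s) s (mI_diff _ _ (hVp k) (Bk_pos b hb k) _ ?_) h1
      have := (Complex.re_le_norm s).trans (mem_ball_zero_iff.1 hs).le
      simp
      linarith
  have hrb : ∀ (k : ℕ) (s : ℂ), s ∈ Metric.ball (0 : ℂ) R →
      ‖r k s‖ ≤ S * (b⁻¹) ^ (J + 2) * ((k : ℝ) + 1) ^ (-2 : ℝ) := by
    intro k s hs
    have hsR : ‖s‖ ≤ R := (mem_ball_zero_iff.1 hs).le
    have hk := kpos k
    have hB := Bk_pos b hb k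
    have hre := abs_le.1 ((Complex.abs_re_le_norm s).trans hsR)
    set z : ℂ := ((J + 1 : ℕ) : ℂ) + 1 - s with hz
    have hzre : z.re = (J : ℝ) + 2 - s.re := by
      simp [hz]; ring
    have h1 : ‖mI (Vk δ k) (Bk b k) z‖ ≤ Vk δ k ^ z.re * (Bk b k)⁻¹ :=
      mI_bound _ _ (hVp k) hB z (by rw [hzre]; linarith [hre.2])
    have h2 : Vk δ k ^ z.re ≤ ((k : ℝ) + 1) ^ (2 * δ * (2 * J + 2)) := by
      calc Vk δ k ^ z.re ≤ (((k : ℝ) + 1) ^ (2 * δ)) ^ z.re := by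
            apply Real.rpow_le_rpow (hVp k).le (Vk_le δ k)
            rw [hzre]; linarith [hre.2]
        _ = ((k : ℝ) + 1) ^ (2 * δ * z.re) := by rw [← Real.rpow_mul hk.le]
        _ ≤ _ := by
          apply Real.rpow_le_rpow_of_exponent_le (kone k)
          apply mul_le_mul_of_nonneg_left _ (by linarith)
          rw [hzre]; linarith [hre.1]
    have h3 : ((Bk b k)⁻¹) ^ (J + 2) ≤ (b⁻¹) ^ (J + 2) * ((k : ℝ) + 1) ^ (-2 * ((J : ℝ) + 2)) := by
      calc ((Bk b k)⁻¹) ^ (J + 2) ≤ (b⁻¹ * ((k : ℝ) + 1) ^ (-2 : ℝ)) ^ (J + 2) := by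
            apply pow_le_pow_left₀ (by positivity) (Bk_inv_le b hb k)
        _ = _ := by
          rw [mul_pow, Real.rpow_mul hk.le]
          congr 1
          rw [← Real.rpow_natCast (((k : ℝ) + 1) ^ (-2 : ℝ))]
          push_cast
          rfl
    have hnorm : ‖r k s‖ = ‖Complex.sin (Real.pi * s)‖ * ((Bk b k)⁻¹) ^ (J + 1) *
        ‖mI (Vk δ k) (Bk b k) z‖ := by
      simp only [r, norm_mul, norm_pow, norm_neg, norm_one, one_pow, one_mul, norm_inv,
        Complex.norm_real, Real.norm_eq_abs, abs_of_pos hB]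
      rfl
    rw [hnorm]
    calc _ ≤ S * ((Bk b k)⁻¹) ^ (J + 1) * (((k : ℝ) + 1) ^ (2 * δ * (2 * J + 2)) * (Bk b k)⁻¹) := by
          have : 0 ≤ ((Bk b k)⁻¹) ^ (J + 1) := by positivity
          have a1 := hS s (by simpa using hsR)
          have a2 : ‖mI (Vk δ k) (Bk b k) z‖ ≤ ((k : ℝ) + 1) ^ (2 * δ * (2 * J + 2)) * (Bk b k)⁻¹ :=
            h1.trans (mul_le_mul_of_nonneg_right h2 (by positivity))
          gcongr
      _ = S * (((Bk b k)⁻¹) ^ (J + 2) * ((k : ℝ) + 1) ^ (2 * δ * (2 * J + 2))) := by ring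
      _ ≤ S * ((b⁻¹) ^ (J + 2) * ((k : ℝ) + 1) ^ (-2 * ((J : ℝ) + 2)) *
            ((k : ℝ) + 1) ^ (2 * δ * (2 * J + 2))) := by gcongr
      _ = S * (b⁻¹) ^ (J + 2) * ((k : ℝ) + 1) ^ (-2 * ((J : ℝ) + 2) + 2 * δ * (2 * J + 2)) := by
          rw [Real.rpow_add hk]; ring
      _ ≤ _ := by
          apply mul_le_mul_of_nonneg_left _ (by positivity)
          apply Real.rpow_le_rpow_of_exponent_le (kone k)
          have : (0 : ℝ) ≤ J := Nat.cast_nonneg J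
          nlinarith
  have hsum : Summable (fun k : ℕ => S * (b⁻¹) ^ (J + 2) * ((k : ℝ) + 1) ^ (-2 : ℝ)) :=
    sum_k2.mul_left _
  have hrsum := Complex.differentiableOn_tsum_of_summable_norm hsum hrd Metric.isOpen_ball hrb
  refine ⟨J, fun s => (∑ j ∈ Finset.range (J + 1), gC j s * P j s) + ∑' k, r k s, ?_, ?_⟩
  · intro s hs
    apply MeromorphicAt.fun_add
    · apply MeromorphicAt.fun_sum
      intro j _
      exact ((gC_diff j).analyticAt s).meromorphicAt.fun_mul (hP1 j s hs)
    · exact (hrsum.analyticAt (Metric.isOpen_ball.mem_nhds hs)).meromorphicAt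
  · intro s hs h1
    have hj : ∀ j : ℕ, 1 < 2 * δ * s.re + (2 - 2 * δ) * (j + 1) := by
      intro j
      have : (0 : ℝ) ≤ j := Nat.cast_nonneg j
      nlinarith
    constructor
    · apply DifferentiableAt.fun_add
      · apply DifferentiableAt.fun_sum
        intro j _
        exact (gC_diff j s).fun_mul (hP2 j s hs (hj j)).1
      · exact hrsum.differentiableAt (Metric.isOpen_ball.mem_nhds hs)
    · have hr1 : HasSum (fun k => r k s) (∑' k, r k s) :=
        (Summable.of_norm_bounded hsum (fun k => hrb k s hs)).hasSum
      have hm : HasSum (fun k : ℕ => ∑ j ∈ Finset.range (J + 1), gC j s *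
          (((Vk δ k : ℝ) : ℂ) ^ ((j : ℂ) + 1 - s) * ((Bk b k : ℝ) : ℂ) ^ (-((j : ℂ) + 1))))
          (∑ j ∈ Finset.range (J + 1), gC j s * P j s) := by
        apply hasSum_sum
        intro j _
        exact (hP2 j s hs (hj j)).2.mul_left _
      exact hm.add hr1

lemma cont_Q (b : ℝ) (hb : 0 < b) (R : ℝ) (hR : 0 < R) :
    ∃ M : ℂ → ℂ, MeromorphicOn M (Metric.ball 0 R) ∧
      ∀ s ∈ Metric.ball (0 : ℂ) R, 1 < 2 * s.re + 2 → DifferentiableAt ℂ M s ∧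
        HasSum (fun k : ℕ => ((k : ℂ) + 1) ^ (-(2 * s)) *
          (((1 + (1 / (4 * b)) * ((k : ℝ) + 1) ^ (-(2 : ℝ)) : ℝ) : ℂ) ^ (-s) - 1)) (M s) := by
  have hε : -(1 / 4) ≤ 1 / (4 * b) :=
    (show -(1 / 4) ≤ (0 : ℝ) by norm_num).trans (by positivity)
  have hX := exp_shift (exp_binom 2 (1 / (4 * b)) (by norm_num) hε (fun s => -s) (by fun_prop))
  have hY := exp_binom 2 (1 / (4 * b)) (by norm_num) hε (fun _ => 0) (by fun_prop)
  obtain ⟨M, hM1, hM2⟩ := exp_cont (by norm_num) (by norm_num) hX hY 2 2 R hR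
  refine ⟨M, hM1, fun s hs h1 => ?_⟩
  obtain ⟨h2, h3⟩ := hM2 s hs h1
  refine ⟨h2, ?_⟩
  convert! h3 using 1
  ext k
  have e : ((k : ℂ) + 1) ^ (-(2 * s)) = ((k : ℂ) + 1) ^ (-(((2 : ℝ) : ℂ) * s + ((2 : ℝ) : ℂ))) *
      ((k : ℂ) + 1) ^ ((2 : ℝ) : ℂ) := by
    rw [← Complex.cpow_add _ _ (kne k)]
    congr 1
    push_cast
    ring
  rw [e]
  simp only [binC, Complex.cpow_zero, pow_zero, mul_one]
  ring

/-- coefficient b -/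
noncomputable def bη (ω : ℕ) (η : ℝ) : ℝ := (ω : ℝ) ^ 2 * (Real.sinh η)⁻¹ ^ 2

lemma bη_pos (ω : ℕ) (hω : 1 ≤ ω) (η : ℝ) (hη : 0 < η) : 0 < bη ω η := by
  have : (0 : ℝ) < ω := by exact_mod_cast hω
  have := Real.sinh_pos_iff.2 hη
  unfold bη; positivity

lemma cone_subst (ω : ℕ) (hω : 1 ≤ ω) (η : ℝ) (hη : 0 < η) (δ : ℝ) (k : ℕ) (s : ℂ) :
    coneE0 ω η δ (k + 1) s = -(Complex.sin (Real.pi * s) / Real.pi) * (1 / 2 *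
      ∫ v in Set.Ioi (Vk δ k), (v : ℂ) ^ (-s) / ((v + Bk (bη ω η) k : ℝ) : ℂ)) := by
  have hw : (0 : ℝ) < ω := by exact_mod_cast hω
  have hc : 0 < (Real.sinh η)⁻¹ := inv_pos.2 (Real.sinh_pos_iff.2 hη)
  have hk := kpos k
  rw [coneE0]
  congr 1
  set K : ℝ := (k : ℝ) + 1 with hK
  have hcast : ((k + 1 : ℕ) : ℝ) = K := by push_cast; rfl
  rw [hcast]
  set c := (Real.sinh η)⁻¹ with hcdef
  set a : ℝ := K ^ (δ - 1) / ω with ha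
  have ha0 : 0 < a := div_pos (Real.rpow_pos_of_pos hk _) hw
  let f : ℝ → ℝ := fun u => K ^ 2 * (ω : ℝ) ^ 2 * u ^ 2 - 1 / 4
  have hfa : f a = Vk δ k := by
    simp only [f, ha, Vk]
    rw [div_pow, ← hK]
    have : (K ^ (δ - 1)) ^ 2 * K ^ 2 = K ^ (2 * δ) := by
      rw [← Real.rpow_natCast, ← Real.rpow_mul hk.le, ← Real.rpow_natCast K, ← Real.rpow_add hk]
      congr 1; push_cast; ring
    rw [← this]
    field_simp
  have himg : f '' Set.Ioi a = Set.Ioi (Vk δ k) := by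
    ext v
    constructor
    · rintro ⟨u, hu, rfl⟩
      rw [← hfa]
      have hu' : a < u := hu
      have : a ^ 2 < u ^ 2 := by nlinarith
      have h2 : K ^ 2 * (ω : ℝ) ^ 2 * a ^ 2 < K ^ 2 * (ω : ℝ) ^ 2 * u ^ 2 := by gcongr
      simp only [f, Set.mem_Ioi]; linarith
    · intro hv
      have hv' : f a < v := by rw [hfa]; exact hv
      simp only [f] at hv'
      have hv0 : 0 < v + 1 / 4 := by
        have : 0 < K ^ 2 * (ω : ℝ) ^ 2 * a ^ 2 := by positivity
        linarith
      refine ⟨Real.sqrt ((v + 1 / 4) / (K ^ 2 * (ω : ℝ) ^ 2)), ?_, ?_⟩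
      · apply Real.lt_sqrt_of_sq_lt
        rw [lt_div_iff₀ (by positivity)]
        linarith
      · simp only [f]
        rw [Real.sq_sqrt (by positivity)]
        field_simp
        ring
  have hder : ∀ u ∈ Set.Ioi a, HasDerivWithinAt f (K ^ 2 * (ω : ℝ) ^ 2 * (2 * u)) (Set.Ioi a) u := by
    intro u _
    have := (((hasDerivAt_pow 2 u).const_mul (K ^ 2 * (ω : ℝ) ^ 2)).sub_const (1 / 4)).hasDerivWithinAt
      (s := Set.Ioi a)
    convert! this using 1
    simp
  have hinj : Set.InjOn f (Set.Ioi a) := by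
    intro u hu w hw' h
    have hu' : a < u := hu
    have hw'' : a < w := hw'
    simp only [f] at h
    have h3 : K ^ 2 * (ω : ℝ) ^ 2 * u ^ 2 = K ^ 2 * (ω : ℝ) ^ 2 * w ^ 2 := by linarith
    have h4 : u ^ 2 = w ^ 2 := mul_left_cancel₀ (by positivity) h3
    exact (sq_eq_sq₀ (by linarith) (by linarith)).1 h4
  rw [← himg, integral_image_eq_integral_abs_deriv_smul measurableSet_Ioi hder hinj,
    ← integral_const_mul]
  apply setIntegral_congr_fun measurableSet_Ioi
  intro u hu
  have hu0 : 0 < u := ha0.trans hu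
  have e : f u + Bk (bη ω η) k = K ^ 2 * (ω : ℝ) ^ 2 * (u ^ 2 + c ^ 2) := by
    simp only [f, Bk, bη, ← hK, ← hcdef]; ring
  simp only []
  rw [e, abs_of_pos (by positivity), Complex.real_smul]
  have h1 : (K : ℂ) ≠ 0 := by exact_mod_cast hk.ne'
  have h2 : (ω : ℂ) ≠ 0 := by exact_mod_cast hw.ne'
  have h3 : ((u : ℂ) ^ 2 + (c : ℂ) ^ 2) ≠ 0 := by
    have : u ^ 2 + c ^ 2 ≠ 0 := by positivity
    exact_mod_cast this
  simp only [f]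
  push_cast
  field_simp

lemma cone_strip (ω : ℕ) (hω : 1 ≤ ω) (η : ℝ) (hη : 0 < η) (δ : ℝ) (hδ : 0 < δ) (k : ℕ) (s : ℂ)
    (h1 : 1 < s.re) (h2 : s.re < 2) :
    coneE0 ω η δ (k + 1) s = -(1 / 2) * ((Bk (bη ω η) k : ℝ) : ℂ) ^ (-s) +
      1 / (2 * Real.pi) * Tk δ (bη ω η) 1 k s := by
  have hb := bη_pos ω hω η hη
  have hB := Bk_pos _ hb k
  have hV : 0 < Vk δ k := by linarith [Vk_ge δ hδ k]
  have hpi : (Real.pi : ℂ) ≠ 0 := by exact_mod_cast Real.pi_ne_zero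
  have hsin : Complex.sin (Real.pi * s) ≠ 0 := by
    intro h
    obtain ⟨n, hn⟩ := Complex.sin_eq_zero_iff.1 h
    have : s = n := by
      rw [mul_comm] at hn
      exact mul_right_cancel₀ hpi hn
    rw [this] at h1 h2
    simp at h1 h2
    norm_cast at h1 h2
    omega
  have hne : s ≠ ((0 : ℕ) : ℂ) + 1 := by
    rintro rfl
    simp at h1
  have hs1 : s - 1 ≠ 0 := by simpa [sub_eq_zero] using hne
  have hs2 : 1 - s ≠ 0 := by
    intro h; apply hs1; linear_combination -h
  rw [cone_subst ω hω η hη, tail_formula _ _ hV hB s h1 h2, Tk]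
  simp only [Finset.sum_range_one]
  rw [gC_mul 0 s hne]
  have hB' : ((Bk (bη ω η) k : ℝ) : ℂ) ≠ 0 := by exact_mod_cast hB.ne'
  have e1 : (((1 : ℕ) : ℂ) + 1 - s) = 2 - s := by push_cast; ring
  rw [e1]
  simp only [Nat.cast_zero, zero_add, pow_zero, one_mul, pow_one]
  rw [Complex.cpow_neg_one, show (1 : ℂ) - s = -(s - 1) by ring]
  field_simp
  ring

lemma cone_bound (ω : ℕ) (hω : 1 ≤ ω) (η : ℝ) (hη : 0 < η) (δ : ℝ) (hδ : 0 < δ) (ε S : ℝ)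
    (hε : 0 < ε) (k : ℕ) (s : ℂ) (h1 : 1 + ε ≤ s.re) (h2 : s.re < 2)
    (hS : ‖Complex.sin (Real.pi * s)‖ ≤ S) :
    ‖coneE0 ω η δ (k + 1) s‖ ≤ S * (4 / 3 / ε * (bη ω η)⁻¹) * ((k : ℝ) + 1) ^ (-2 : ℝ) := by
  have hb := bη_pos ω hω η hη
  have hB := Bk_pos _ hb k
  have hV34 := Vk_ge δ hδ k
  have hV : 0 < Vk δ k := by linarith
  have hS0 : 0 ≤ S := (norm_nonneg _).trans hS
  rw [cone_subst ω hω η hη]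
  have hT := tail_bound (Vk δ k) (Bk (bη ω η) k) hV hB s (by linarith)
  have hVp : Vk δ k ^ (1 - s.re) ≤ 4 / 3 := by
    calc Vk δ k ^ (1 - s.re) ≤ (3 / 4 : ℝ) ^ (1 - s.re) :=
          Real.rpow_le_rpow_of_nonpos (by norm_num) hV34 (by linarith)
      _ ≤ (3 / 4 : ℝ) ^ (-1 : ℝ) :=
          Real.rpow_le_rpow_of_exponent_ge (by norm_num) (by norm_num) (by linarith)
      _ = 4 / 3 := by rw [Real.rpow_neg_one]; norm_num
  have hT2 : Vk δ k ^ (1 - s.re) / (s.re - 1) * (Bk (bη ω η) k)⁻¹ ≤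
      4 / 3 / ε * ((bη ω η)⁻¹ * ((k : ℝ) + 1) ^ (-2 : ℝ)) := by
    apply mul_le_mul _ (Bk_inv_le _ hb k) (by positivity) (by positivity)
    exact div_le_div₀ (by norm_num) hVp hε (by linarith)
  rw [norm_mul, norm_mul, norm_neg, norm_div]
  have hpi : ‖(Real.pi : ℂ)‖ = Real.pi := by
    rw [Complex.norm_real, Real.norm_eq_abs, abs_of_pos Real.pi_pos]
  rw [hpi]
  have h12 : ‖(1 / 2 : ℂ)‖ ≤ 1 := by norm_num
  have h3 : ‖Complex.sin (Real.pi * s)‖ / Real.pi ≤ S := by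
    rw [div_le_iff₀ Real.pi_pos]
    nlinarith [Real.pi_gt_three]
  calc _ ≤ S * (1 * (4 / 3 / ε * ((bη ω η)⁻¹ * ((k : ℝ) + 1) ^ (-2 : ℝ)))) := by
        apply mul_le_mul h3 _ (by positivity) hS0
        exact mul_le_mul h12 (hT.trans hT2) (norm_nonneg _) zero_le_one
    _ = _ := by ring

lemma cone_summable (ω : ℕ) (hω : 1 ≤ ω) (η : ℝ) (hη : 0 < η) (δ : ℝ) (hδ : 0 < δ) (s : ℂ)
    (h1 : 1 < s.re) (h2 : s.re < 2) :
    Summable (fun k : ℕ => ‖coneE0 ω η δ (k + 1) s‖) :=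
  Summable.of_nonneg_of_le (fun _ => norm_nonneg _)
    (fun k => cone_bound ω hω η hη δ hδ (s.re - 1) _ (by linarith) k s (by linarith) h2 le_rfl)
    (sum_k2.mul_left _)

lemma cone_unif (ω : ℕ) (hω : 1 ≤ ω) (η : ℝ) (hη : 0 < η) (δ : ℝ) (hδ : 0 < δ) :
    TendstoLocallyUniformlyOn
          (fun (n : ℕ) (s : ℂ) => ∑ k ∈ Finset.range n, coneE0 ω η δ (k + 1) s)
          (fun s : ℂ => ∑' k : ℕ, coneE0 ω η δ (k + 1) s)
          atTop {s : ℂ | 1 < s.re ∧ s.re < 2} := by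
  apply tendstoLocallyUniformlyOn_of_forall_exists_nhds
  rintro s ⟨h1, h2⟩
  have hsind : Continuous (fun s : ℂ => Complex.sin (Real.pi * s)) := by fun_prop
  obtain ⟨S, hS⟩ := (isCompact_closedBall (0 : ℂ) (‖s‖ + 1)).exists_bound_of_continuousOn
      hsind.continuousOn
  let ε := (s.re - 1) / 2
  have hε : 0 < ε := by simp only [ε]; linarith
  let U : Set ℂ := {z | 1 + ε < z.re ∧ z.re < 2 ∧ ‖z‖ < ‖s‖ + 1}
  have hU : IsOpen U := by
    apply IsOpen.inter
    · exact isOpen_lt continuous_const Complex.continuous_re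
    · exact (isOpen_lt Complex.continuous_re continuous_const).inter
        (isOpen_lt continuous_norm continuous_const)
  have hsU : s ∈ U := ⟨by simp only [ε]; linarith, h2, by linarith⟩
  refine ⟨U, mem_nhdsWithin_of_mem_nhds (hU.mem_nhds hsU), ?_⟩
  exact tendstoUniformlyOn_tsum_nat (sum_k2.mul_left (S * (4 / 3 / ε * (bη ω η)⁻¹)))
    (fun k z hz => cone_bound ω hω η hη δ hδ ε S hε k z hz.1.le hz.2.1
      (hS z (by simpa using hz.2.2.le)))

lemma sum_k32 : Summable (fun k : ℕ => ((k : ℝ) + 1) ^ (-(3 / 2) : ℝ)) := by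
  have h := (Real.summable_nat_rpow (p := -(3 / 2))).2 (by norm_num)
  have := (summable_nat_add_iff 1).2 h
  simpa using this

lemma Mq_bound (b : ℝ) (hb : 0 < b) (R : ℝ) (hR : 3 ≤ R) (M : ℂ → ℂ)
    (hM : ∀ s ∈ Metric.ball (0 : ℂ) R, 1 < 2 * s.re + 2 → DifferentiableAt ℂ M s ∧
        HasSum (fun k : ℕ => ((k : ℂ) + 1) ^ (-(2 * s)) *
          (((1 + (1 / (4 * b)) * ((k : ℝ) + 1) ^ (-(2 : ℝ)) : ℝ) : ℂ) ^ (-s) - 1)) (M s)) :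
    M 0 = 0 ∧ ‖deriv M 0‖ ≤ (∑' k : ℕ, ((k : ℝ) + 1) ^ (-(3 / 2) : ℝ)) / b := by
  apply aux_deriv_bound M (hM 0 (by simp; linarith) (by norm_num)).1
  intro t ht0 ht1
  have hball : -(t : ℂ) ∈ Metric.ball (0 : ℂ) R := by
    rw [mem_ball_zero_iff, norm_neg, Complex.norm_real, Real.norm_eq_abs, abs_of_pos ht0]
    linarith
  have hs := (hM (-(t : ℂ)) hball (by simp; linarith)).2
  rw [← hs.tsum_eq]
  have hbd : ∀ k : ℕ, ‖((k : ℂ) + 1) ^ (-(2 * -(t : ℂ))) *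
          (((1 + (1 / (4 * b)) * ((k : ℝ) + 1) ^ (-(2 : ℝ)) : ℝ) : ℂ) ^ (- -(t : ℂ)) - 1)‖ ≤
          t / b * ((k : ℝ) + 1) ^ (-(3 / 2) : ℝ) := by
    intro k
    have hk := kpos k
    set y : ℝ := (1 / (4 * b)) * ((k : ℝ) + 1) ^ (-(2 : ℝ)) with hy
    have hy0 : 0 ≤ y := by positivity
    rw [norm_mul, knorm]
    have e1 : (-(2 * -(t : ℂ))).re = 2 * t := by simp
    rw [e1, neg_neg, ← Complex.ofReal_cpow (by linarith)]
    have e2 : ‖(((1 + y) ^ t : ℝ) : ℂ) - 1‖ ≤ t * y := by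
      rw [← Complex.ofReal_one, ← Complex.ofReal_sub, Complex.norm_real, Real.norm_eq_abs, abs_of_nonneg]
      · have := rpow_one_add_le_one_add_mul_self (s := y) (by linarith) ht0.le (by linarith)
        linarith
      · have := Real.one_le_rpow (show 1 ≤ 1 + y by linarith) ht0.le
        linarith
    calc _ ≤ ((k : ℝ) + 1) ^ (2 * t) * (t * y) := by gcongr
      _ = t / (4 * b) * ((k : ℝ) + 1) ^ (2 * t + -(2 : ℝ)) := by
        rw [Real.rpow_add hk, hy]; ring
      _ ≤ t / b * ((k : ℝ) + 1) ^ (-(3 / 2) : ℝ) := by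
        apply mul_le_mul
        · apply div_le_div_of_nonneg_left ht0.le hb; linarith
        · exact Real.rpow_le_rpow_of_exponent_le (kone k) (by linarith)
        · positivity
        · positivity
  have := tsum_of_norm_bounded (sum_k32.mul_left (t / b)).hasSum hbd
  refine this.trans (le_of_eq ?_)
  rw [tsum_mul_left]; ring

lemma Mt_bound (δ b : ℝ) (hδ : 0 < δ) (hδ1 : δ < 1 / 8) (hb : 0 < b) (R : ℝ) (hR : 3 ≤ R) (J : ℕ)
    (M : ℂ → ℂ)
    (hM : ∀ s ∈ Metric.ball (0 : ℂ) R, 1 < 2 * δ * s.re + (2 - 2 * δ) → DifferentiableAt ℂ M s ∧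
        HasSum (fun k : ℕ => Tk δ b (J + 1) k s) (M s)) :
    M 0 = 0 ∧ ‖deriv M 0‖ ≤ Real.pi * (∑' k : ℕ, ((k : ℝ) + 1) ^ (-(3 / 2) : ℝ)) / b := by
  apply aux_deriv_bound M (hM 0 (by simp; linarith) (by simp; linarith)).1
  intro t ht0 ht1
  have hball : -(t : ℂ) ∈ Metric.ball (0 : ℂ) R := by
    rw [mem_ball_zero_iff, norm_neg, Complex.norm_real, Real.norm_eq_abs, abs_of_pos ht0]
    linarith
  have hs := (hM (-(t : ℂ)) hball (by simp; nlinarith)).2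
  rw [← hs.tsum_eq]
  have hbd : ∀ k : ℕ, ‖Tk δ b (J + 1) k (-(t : ℂ))‖ ≤
          Real.pi * t / b * ((k : ℝ) + 1) ^ (-(3 / 2) : ℝ) := by
    intro k
    have hk := kpos k
    have hB := Bk_pos b hb k
    have hV : 0 < Vk δ k := by linarith [Vk_ge δ hδ k]
    rw [Tk_zero δ b hδ hb _ k _ (by simp; linarith), norm_mul]
    have h1 : ‖Complex.sin (Real.pi * -(t : ℂ))‖ ≤ Real.pi * t := by
      have : (Real.pi : ℂ) * -(t : ℂ) = ((-(Real.pi * t) : ℝ) : ℂ) := by push_cast; ring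
      rw [this, ← Complex.ofReal_sin, Complex.norm_real, Real.norm_eq_abs, Real.sin_neg, abs_neg]
      have h2 : 0 ≤ Real.pi * t := by positivity
      rw [abs_of_nonneg]
      · exact Real.sin_le h2
      · apply Real.sin_nonneg_of_nonneg_of_le_pi h2
        nlinarith [Real.pi_pos]
    have ez : ((1 : ℂ) - -(t : ℂ)).re = 1 + t := by simp
    have h2 := mI_bound (Vk δ k) (Bk b k) hV hB (1 - -(t : ℂ)) (by rw [ez]; linarith)
    rw [ez] at h2
    have h3 : Vk δ k ^ (1 + t) ≤ ((k : ℝ) + 1) ^ (1 / 2 : ℝ) := by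
      calc Vk δ k ^ (1 + t) ≤ (((k : ℝ) + 1) ^ (2 * δ)) ^ (1 + t) :=
            Real.rpow_le_rpow hV.le (Vk_le δ k) (by linarith)
        _ = ((k : ℝ) + 1) ^ (2 * δ * (1 + t)) := by rw [← Real.rpow_mul hk.le]
        _ ≤ _ := Real.rpow_le_rpow_of_exponent_le (kone k) (by nlinarith)
    calc _ ≤ (Real.pi * t) * (((k : ℝ) + 1) ^ (1 / 2 : ℝ) * (b⁻¹ * ((k : ℝ) + 1) ^ (-2 : ℝ))) := by
          apply mul_le_mul h1 _ (norm_nonneg _) (by positivity)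
          refine h2.trans ?_
          exact mul_le_mul h3 (Bk_inv_le b hb k) (by positivity) (by positivity)
      _ = Real.pi * t / b * (((k : ℝ) + 1) ^ (1 / 2 : ℝ) * ((k : ℝ) + 1) ^ (-2 : ℝ)) := by
          field_simp
      _ = _ := by
          rw [← Real.rpow_add hk]; norm_num
  have := tsum_of_norm_bounded (sum_k32.mul_left (Real.pi * t / b)).hasSum hbd
  refine this.trans (le_of_eq ?_)
  rw [tsum_mul_left]; ring

lemma local_thm (ω : ℕ) (hω : 1 ≤ ω) (δ : ℝ) (hδ : 0 < δ) (hδ1 : δ < 1 / 8) (η : ℝ) (hη : 0 < η)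
    (R : ℝ) (hR : 3 ≤ R) :
    ∃ M : ℂ → ℂ, MeromorphicOn M (Metric.ball 0 R) ∧
      (∀ s ∈ Metric.ball (0 : ℂ) R, 1 < s.re → s.re < 2 →
        AnalyticAt ℂ M s ∧ M s = ∑' k : ℕ, coneE0 ω η δ (k + 1) s) ∧
      AnalyticAt ℂ M 0 ∧
      ‖deriv M 0 - (riemannZeta 0 * ((1 / 2 * Real.log (bη ω η) : ℝ) : ℂ) - deriv riemannZeta 0)‖ ≤
        (∑' k : ℕ, ((k : ℝ) + 1) ^ (-(3 / 2) : ℝ)) / bη ω η := by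
  have hb := bη_pos ω hω η hη
  set b := bη ω η with hbdef
  have hbC : (b : ℂ) ≠ 0 := by exact_mod_cast hb.ne'
  obtain ⟨Mq, hq1, hq2⟩ := cont_Q b hb R (by linarith)
  obtain ⟨J, Mt, ht1, ht2⟩ := cont_T δ b hδ hδ1 hb R (by linarith)
  obtain ⟨hq0, hqd⟩ := Mq_bound b hb R hR Mq hq2
  obtain ⟨ht0, htd⟩ := Mt_bound δ b hδ hδ1 hb R hR J Mt ht2
  let M : ℂ → ℂ := fun s => -(1 / 2) * ((b : ℂ) ^ (-s) * (riemannZeta (2 * s) + Mq s)) +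
    1 / (2 * Real.pi) * Mt s
  have hpowd : Differentiable ℂ (fun s : ℂ => (b : ℂ) ^ (-s)) := by
    intro s
    exact (differentiableAt_id.neg).const_cpow (Or.inl hbC)
  let U : Set ℂ := Metric.ball (0 : ℂ) R ∩ ({s | 1 < 2 * s.re + 2} ∩
    ({s | 1 < 2 * δ * s.re + (2 - 2 * δ)} ∩ {s | 2 * s ≠ 1}))
  have hU : IsOpen U := by
    refine Metric.isOpen_ball.inter (IsOpen.inter ?_ (IsOpen.inter ?_ ?_))
    · exact isOpen_lt continuous_const (by fun_prop)
    · exact isOpen_lt continuous_const (by fun_prop)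
    · exact isOpen_ne_fun (by fun_prop) continuous_const
  have hzd : ∀ s : ℂ, 2 * s ≠ 1 → DifferentiableAt ℂ (fun s : ℂ => riemannZeta (2 * s)) s := by
    intro s hs
    exact DifferentiableAt.comp (g := riemannZeta) (f := fun s : ℂ => 2 * s) s
      (differentiableAt_riemannZeta hs) (by fun_prop)
  have hMd : DifferentiableOn ℂ M U := by
    rintro s ⟨h1, h2, h3, h4⟩
    apply DifferentiableAt.differentiableWithinAt
    exact (((hpowd s).fun_mul ((hzd s h4).fun_add (hq2 s h1 h2).1)).const_mul _).fun_add
      ((ht2 s h1 h3).1.const_mul _)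
  have hMa : ∀ s ∈ U, AnalyticAt ℂ M s := fun s hs => hMd.analyticAt (hU.mem_nhds hs)
  have h0U : (0 : ℂ) ∈ U := by
    refine ⟨by simp; linarith, by simp, ?_, by simp⟩
    simp; linarith
  refine ⟨M, ?_, ?_, hMa 0 h0U, ?_⟩
  · intro s hs
    apply MeromorphicAt.fun_add
    · apply (MeromorphicAt.const _ _).fun_mul
      apply (hpowd.analyticAt s).meromorphicAt.fun_mul
      apply MeromorphicAt.fun_add _ (hq1 s hs)
      have := aux_zeta_affine_mero 2 0 s
      simpa using this
    · exact (MeromorphicAt.const _ _).fun_mul (ht1 s hs)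
  · intro s hs h1 h2
    have c1 : 1 < 2 * s.re + 2 := by linarith
    have c2 : 1 < 2 * δ * s.re + (2 - 2 * δ) := by nlinarith
    have c3 : 2 * s ≠ 1 := by
      intro h
      have := congrArg Complex.re h
      simp at this
      linarith
    refine ⟨hMa s ⟨hs, c1, c2, c3⟩, ?_⟩
    have hz := hasSum_zeta (2 * s) (by simp; linarith)
    have hsum := ((((hz.add (hq2 s hs c1).2).mul_left ((b : ℂ) ^ (-s))).mul_left (-(1 / 2))).add
      ((ht2 s hs c2).2.mul_left (1 / (2 * (Real.pi : ℂ)))))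
    refine hsum.tsum_eq.symm.trans ?_
    apply tsum_congr
    intro k
    rw [cone_strip ω hω η hη δ hδ k s h1 h2, Tk_one δ b hδ hb J k s h2, Bk_cpow _ hb]
    rw [show 2 * -s = -(2 * s) by ring]
    ring
  · have hd1 : HasDerivAt (fun s : ℂ => (b : ℂ) ^ (-s)) (-(Real.log b : ℂ)) 0 := by
      have := (hasDerivAt_neg (0 : ℂ)).const_cpow (c := (b : ℂ)) (Or.inl hbC)
      simpa [← Complex.ofReal_log hb.le] using this
    have hd2 : HasDerivAt (fun s : ℂ => riemannZeta (2 * s)) (deriv riemannZeta 0 * 2) 0 := by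
      have h1 : HasDerivAt riemannZeta (deriv riemannZeta 0) (2 * (0 : ℂ)) := by
        rw [mul_zero]
        exact (differentiableAt_riemannZeta (by norm_num)).hasDerivAt
      have h2 : HasDerivAt (fun s : ℂ => 2 * s) 2 0 := by
        simpa using (hasDerivAt_id (0 : ℂ)).const_mul 2
      exact HasDerivAt.comp (h₂ := riemannZeta) (h := fun s : ℂ => 2 * s) 0 h1 h2
    have hd3 : HasDerivAt Mq (deriv Mq 0) 0 := (hq2 0 h0U.1 h0U.2.1).1.hasDerivAt
    have hd4 : HasDerivAt Mt (deriv Mt 0) 0 := (ht2 0 h0U.1 h0U.2.2.1).1.hasDerivAt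
    have hd := ((hd1.fun_mul (hd2.fun_add hd3)).const_mul (-(1 / 2) : ℂ)).fun_add
      (hd4.const_mul (1 / (2 * (Real.pi : ℂ))))
    have hdM : deriv M 0 = _ := hd.deriv
    rw [hdM, hq0]
    simp only [mul_zero, neg_zero, Complex.cpow_zero, add_zero]
    have e : -(1 / 2) * (-(Real.log b : ℂ) * riemannZeta 0 + 1 * (deriv riemannZeta 0 * 2 + deriv Mq 0)) +
        1 / (2 * (Real.pi : ℂ)) * deriv Mt 0 -
        (riemannZeta 0 * ((1 / 2 * Real.log b : ℝ) : ℂ) - deriv riemannZeta 0) =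
        1 / (2 * (Real.pi : ℂ)) * deriv Mt 0 - (1 / 2) * deriv Mq 0 := by
      push_cast; ring
    rw [e]
    refine (norm_sub_le _ _).trans ?_
    rw [norm_mul, norm_mul]
    have n1 : ‖(1 / (2 * (Real.pi : ℂ)))‖ = 1 / (2 * Real.pi) := by
      rw [norm_div, norm_mul, Complex.norm_real, Real.norm_eq_abs, abs_of_pos Real.pi_pos]
      simp
    have n2 : ‖(1 / 2 : ℂ)‖ = 1 / 2 := by norm_num
    rw [n1, n2]
    calc _ ≤ 1 / (2 * Real.pi) * (Real.pi * (∑' k : ℕ, ((k : ℝ) + 1) ^ (-(3 / 2) : ℝ)) / b) +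
          1 / 2 * ((∑' k : ℕ, ((k : ℝ) + 1) ^ (-(3 / 2) : ℝ)) / b) := by gcongr
      _ = _ := by
        have := Real.pi_ne_zero
        field_simp
        ring

lemma log_sinh_lim : Tendsto (fun η : ℝ => Real.log (η / Real.sinh η)) (nhdsWithin 0 (Set.Ioi 0))
    (nhds 0) := by
  have h1 : Tendsto (fun η : ℝ => Real.sinh η / η) (nhdsWithin 0 (Set.Ioi 0)) (nhds 1) := by
    have h := (Real.hasDerivAt_sinh 0).tendsto_slope_zero_right
    simp at h
    refine h.congr fun η => ?_
    rw [div_eq_inv_mul]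
  have h2 := (h1.inv₀ one_ne_zero).log (by norm_num)
  simp at h2
  simpa using h2

lemma log_bη (ω : ℕ) (hω : 1 ≤ ω) (η : ℝ) (hη : 0 < η) :
    1 / 2 * Real.log (bη ω η) = Real.log ω - Real.log η + Real.log (η / Real.sinh η) := by
  have hw : (0 : ℝ) < ω := by exact_mod_cast hω
  have hs := Real.sinh_pos_iff.2 hη
  rw [bη, Real.log_mul (by positivity) (by positivity), Real.log_pow, Real.log_pow, Real.log_inv,
    Real.log_div hη.ne' hs.ne']
  push_cast
  ring

lemma inv_bη_lim (ω : ℕ) (hω : 1 ≤ ω) (C : ℝ) :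
    Tendsto (fun η : ℝ => C / bη ω η) (nhdsWithin 0 (Set.Ioi 0)) (nhds 0) := by
  have h : Tendsto (fun η : ℝ => C / (ω : ℝ) ^ 2 * Real.sinh η ^ 2) (nhds 0) (nhds 0) := by
    have : Continuous (fun η : ℝ => C / (ω : ℝ) ^ 2 * Real.sinh η ^ 2) := by fun_prop
    simpa using this.tendsto 0
  refine (h.mono_left nhdsWithin_le_nhds).congr fun η => ?_
  rw [bη, inv_pow, div_mul_eq_div_div, div_inv_eq_mul]

/-- for fixed integer `ω ≥ 1` and `δ ∈ (0,1/8)`, for every `η > 0` the series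
`ζ_{E₀}(s) = Σ_{k≥1} E_{0,k}(s)` converges absolutely and locally uniformly on the strip
`1 < Re(s) < 2`, its sum extends to a meromorphic function on `ℂ` holomorphic at `s = 0`, and
the derivative at `0` satisfies `ζ_{E₀}'(0) = ζ(0)·log ω - ζ'(0) - ζ(0)·log η + o(1)` as
`η → 0⁺`. -/
theorem statement6 (ω : ℕ) (hω : 1 ≤ ω) (δ : ℝ) (hδ0 : 0 < δ) (hδ1 : δ < 1 / 8) :
    ∃ F : ℝ → ℂ → ℂ,
      (∀ η : ℝ, 0 < η →
        (∀ s ∈ {s : ℂ | 1 < s.re ∧ s.re < 2},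
          Summable (fun k : ℕ => ‖coneE0 ω η δ (k + 1) s‖)) ∧
        TendstoLocallyUniformlyOn
          (fun (n : ℕ) (s : ℂ) => ∑ k ∈ Finset.range n, coneE0 ω η δ (k + 1) s)
          (fun s : ℂ => ∑' k : ℕ, coneE0 ω η δ (k + 1) s)
          atTop {s : ℂ | 1 < s.re ∧ s.re < 2} ∧
        MeromorphicOn (F η) Set.univ ∧
        Set.EqOn (F η) (fun s : ℂ => ∑' k : ℕ, coneE0 ω η δ (k + 1) s)
          {s : ℂ | 1 < s.re ∧ s.re < 2} ∧
        AnalyticAt ℂ (F η) 0) ∧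
      Tendsto
        (fun η : ℝ => deriv (F η) 0 -
          (riemannZeta 0 * (Real.log ω : ℂ) - deriv riemannZeta 0 -
            riemannZeta 0 * (Real.log η : ℂ)))
        (nhdsWithin 0 (Set.Ioi 0)) (nhds 0) := by
  set C : ℝ := ∑' k : ℕ, ((k : ℝ) + 1) ^ (-(3 / 2) : ℝ) with hC
  have key : ∀ η : ℝ, ∃ F : ℂ → ℂ, 0 < η → MeromorphicOn F Set.univ ∧
      Set.EqOn F (fun s : ℂ => ∑' k : ℕ, coneE0 ω η δ (k + 1) s) {s : ℂ | 1 < s.re ∧ s.re < 2} ∧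
      AnalyticAt ℂ F 0 ∧
      ‖deriv F 0 - (riemannZeta 0 * ((1 / 2 * Real.log (bη ω η) : ℝ) : ℂ) - deriv riemannZeta 0)‖ ≤
        C / bη ω η := by
    intro η
    by_cases hη : 0 < η
    · have hR : ∀ n : ℕ, (3 : ℝ) ≤ (n : ℝ) + 3 := fun n => by
        have : (0 : ℝ) ≤ n := Nat.cast_nonneg n
        linarith
      choose M hM1 hM2 hM3 hM4 using fun n : ℕ => local_thm ω hω δ hδ0 hδ1 η hη ((n : ℝ) + 3) (hR n)
      obtain ⟨F, hF1, hF2⟩ := aux_glue M (fun n => (n : ℝ) + 3) hR (fun n => by simp)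
        (fun s => ∑' k : ℕ, coneE0 ω η δ (k + 1) s) hM1
        (fun n s hs h1 h2 => (hM2 n s hs h1 h2).2)
      have hev : F =ᶠ[nhds 0] M 0 := hF2 0 0 (by simp) (hM3 0)
      refine ⟨F, fun _ => ⟨hF1, ?_, (hM3 0).congr hev.symm, ?_⟩⟩
      · rintro s ⟨h1, h2⟩
        obtain ⟨n, hn⟩ := exists_nat_ge ‖s‖
        have hs : s ∈ Metric.ball (0 : ℂ) ((n : ℝ) + 3) := by
          rw [mem_ball_zero_iff]; linarith
        obtain ⟨a1, a2⟩ := hM2 n s hs h1 h2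
        exact (hF2 n s hs a1).eq_of_nhds.trans a2
      · rw [hev.deriv_eq]
        exact hM4 0
    · exact ⟨0, fun h => absurd h hη⟩
  choose F hF using key
  refine ⟨F, fun η hη => ?_, ?_⟩
  · obtain ⟨h1, h2, h3, -⟩ := hF η hη
    exact ⟨fun s hs => cone_summable ω hω η hη δ hδ0 s hs.1 hs.2, cone_unif ω hω η hη δ hδ0,
      h1, h2, h3⟩
  · have t1 : Tendsto (fun η : ℝ => deriv (F η) 0 -
        (riemannZeta 0 * ((1 / 2 * Real.log (bη ω η) : ℝ) : ℂ) - deriv riemannZeta 0))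
        (nhdsWithin 0 (Set.Ioi 0)) (nhds 0) := by
      apply squeeze_zero_norm' _ (inv_bη_lim ω hω C)
      filter_upwards [self_mem_nhdsWithin] with η hη
      exact (hF η hη).2.2.2
    have t2 : Tendsto (fun η : ℝ => riemannZeta 0 * ((Real.log (η / Real.sinh η) : ℝ) : ℂ))
        (nhdsWithin 0 (Set.Ioi 0)) (nhds 0) := by
      have := ((Complex.continuous_ofReal.tendsto 0).comp log_sinh_lim).const_mul (riemannZeta 0)
      simpa using this
    have t3 := t1.add t2
    rw [add_zero] at t3
    refine t3.congr' ?_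
    filter_upwards [self_mem_nhdsWithin] with η hη
    rw [log_bη ω hω η hη]
    push_cast
    ring
end
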